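/- arXiv:1510.03267 — 8 statements merged into one kernel-verified Lean document; each statement's English description precedes it below -/
import Mathlib

section
/- Let P be a Borel probability measure on X×Y with marginal P_X on X, and let L be a locally separately Lipschitz continuous pairwise loss function. Then for every B ≥ 0 and all bounded measurable functions f, g : X → ℝ with sup-norms ‖f‖_∞ ≤ B and ‖g‖_∞ ≤ B, one has |R_{L,P}(f) − R_{L,P}(g)| ≤ 2·|L|_{B,1} · ‖f − g‖_{L¹(P_X)}. -/
open MeasureTheory

/-- **Lipschitz continuity of risks.** If `L` is a locally separately Lipschitz continuous
pairwise loss (with local Lipschitz constants `c b` on `[-b,b]`), then for all measurable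
`f, g` bounded by `B` one has `|R_{L,P}(f) - R_{L,P}(g)| ≤ 2 ⬝ c B ⬝ ‖f - g‖_{L¹(P_X)}`. -/
theorem pairwise_risk_lipschitz
    {X : Type*} [MeasurableSpace X] {Y : Set ℝ} (hY : IsClosed Y)
    (L : X → Y → X → Y → ℝ → ℝ → ℝ)
    (hL_nonneg : ∀ x y x' y' t t', 0 ≤ L x y x' y' t t')
    (hL_meas : Measurable fun p : (X × Y) × (X × Y) × ℝ × ℝ =>
      L p.1.1 p.1.2 p.2.1.1 p.2.1.2 p.2.2.1 p.2.2.2)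
    (c : ℝ → ℝ)
    (hc_nonneg : ∀ b, 0 ≤ b → 0 ≤ c b)
    (hLip : ∀ b, 0 ≤ b → ∀ t₁ t₂ s₁ s₂ : ℝ, |t₁| ≤ b → |t₂| ≤ b → |s₁| ≤ b → |s₂| ≤ b →
      ∀ x y x' y',
        |L x y x' y' t₁ t₂ - L x y x' y' s₁ s₂| ≤ c b * (|t₁ - s₁| + |t₂ - s₂|))
    (P : Measure (X × Y)) [IsProbabilityMeasure P]
    (B : ℝ) (hB : 0 ≤ B)
    (f g : X → ℝ) (hf : Measurable f) (hg : Measurable g)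
    (hfB : ∀ x, |f x| ≤ B) (hgB : ∀ x, |g x| ≤ B) :
    |(∫ z : (X × Y) × (X × Y), L z.1.1 z.1.2 z.2.1 z.2.2 (f z.1.1) (f z.2.1) ∂(P.prod P))
      - ∫ z : (X × Y) × (X × Y), L z.1.1 z.1.2 z.2.1 z.2.2 (g z.1.1) (g z.2.1) ∂(P.prod P)|
      ≤ 2 * c B * ∫ x, |f x - g x| ∂(P.map Prod.fst) := by
  have hm : ∀ h : X → ℝ, Measurable h → Measurable (fun z : (X × Y) × (X × Y) =>
      L z.1.1 z.1.2 z.2.1 z.2.2 (h z.1.1) (h z.2.1)) := by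
    intro h hh
    have h2 : Measurable (fun z : (X × Y) × (X × Y) =>
        ((z.1, z.2, h z.1.1, h z.2.1) : (X × Y) × (X × Y) × ℝ × ℝ)) := by fun_prop
    exact hL_meas.comp h2
  have hmf := hm f hf
  have hmg := hm g hg
  have hd : Measurable (fun x => |f x - g x|) := (hf.sub hg).abs
  have hdB : ∀ x, |f x - g x| ≤ 2 * B := fun x => by
    have h1 := abs_le.1 (hfB x)
    have h2 := abs_le.1 (hgB x)
    exact abs_le.2 ⟨by linarith, by linarith⟩
  have hi1 : Integrable (fun z : (X × Y) × (X × Y) => |f z.1.1 - g z.1.1|) (P.prod P) := by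
    refine Integrable.of_bound (C := 2 * B) ?_ ?_
    · exact (hd.comp (measurable_fst.comp measurable_fst)).aestronglyMeasurable
    · exact Filter.Eventually.of_forall fun z => by simpa using hdB z.1.1
  have hi2 : Integrable (fun z : (X × Y) × (X × Y) => |f z.2.1 - g z.2.1|) (P.prod P) := by
    refine Integrable.of_bound (C := 2 * B) ?_ ?_
    · exact (hd.comp (measurable_fst.comp measurable_snd)).aestronglyMeasurable
    · exact Filter.Eventually.of_forall fun z => by simpa using hdB z.2.1
  have hmap : ∫ x, |f x - g x| ∂(P.map Prod.fst) = ∫ z, |f z.1 - g z.1| ∂P :=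
    integral_map measurable_fst.aemeasurable hd.aestronglyMeasurable
  have e1 : ∫ z : (X × Y) × (X × Y), |f z.1.1 - g z.1.1| ∂(P.prod P)
      = ∫ z, |f z.1 - g z.1| ∂P := by
    have := integral_fun_fst (μ := P) (ν := P) (fun z : X × Y => |f z.1 - g z.1|)
    simpa using this
  have e2 : ∫ z : (X × Y) × (X × Y), |f z.2.1 - g z.2.1| ∂(P.prod P)
      = ∫ z, |f z.1 - g z.1| ∂P := by
    have := integral_fun_snd (μ := P) (ν := P) (fun z : X × Y => |f z.1 - g z.1|)
    simpa using this
  have hbd : ∀ z : (X × Y) × (X × Y),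
      ‖L z.1.1 z.1.2 z.2.1 z.2.2 (f z.1.1) (f z.2.1)
        - L z.1.1 z.1.2 z.2.1 z.2.2 (g z.1.1) (g z.2.1)‖
      ≤ c B * (|f z.1.1 - g z.1.1| + |f z.2.1 - g z.2.1|) := fun z =>
    hLip B hB _ _ _ _ (hfB _) (hfB _) (hgB _) (hgB _) _ _ _ _
  have hib := (hi1.add hi2).const_mul (c B)
  have hdiff : Integrable (fun z : (X × Y) × (X × Y) =>
      L z.1.1 z.1.2 z.2.1 z.2.2 (f z.1.1) (f z.2.1)
        - L z.1.1 z.1.2 z.2.1 z.2.2 (g z.1.1) (g z.2.1)) (P.prod P) :=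
    hib.mono' (hmf.sub hmg).aestronglyMeasurable (Filter.Eventually.of_forall hbd)
  by_cases hF : Integrable (fun z : (X × Y) × (X × Y) =>
      L z.1.1 z.1.2 z.2.1 z.2.2 (f z.1.1) (f z.2.1)) (P.prod P)
  · have hG : Integrable (fun z : (X × Y) × (X × Y) =>
        L z.1.1 z.1.2 z.2.1 z.2.2 (g z.1.1) (g z.2.1)) (P.prod P) := by
      refine (hF.sub hdiff).congr (Filter.Eventually.of_forall fun z => ?_)
      simp
    rw [← integral_sub hF hG]
    refine (norm_integral_le_of_norm_le hib (Filter.Eventually.of_forall hbd)).trans ?_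
    have e3 : ∫ z : (X × Y) × (X × Y), c B * (|f z.1.1 - g z.1.1| + |f z.2.1 - g z.2.1|)
        ∂(P.prod P) = 2 * c B * ∫ x, |f x - g x| ∂(P.map Prod.fst) := by
      rw [integral_const_mul, integral_add hi1 hi2, e1, e2, hmap]
      ring
    exact e3.le
  · have hG : ¬ Integrable (fun z : (X × Y) × (X × Y) =>
        L z.1.1 z.1.2 z.2.1 z.2.2 (g z.1.1) (g z.2.1)) (P.prod P) := by
      intro hG
      refine hF ((hG.add hdiff).congr (Filter.Eventually.of_forall fun z => ?_))
      simp
    rw [integral_undef hF, integral_undef hG, sub_zero, abs_zero]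
    exact mul_nonneg (mul_nonneg zero_le_two (hc_nonneg B hB))
      (integral_nonneg fun x => abs_nonneg _)
end

section
/- Let L be a separately Lipschitz continuous pairwise loss function, P a Borel probability measure on X×Y, and H the RKHS of a bounded measurable kernel k on X. Assume R_{L,P}(f₀) < ∞ for some f₀ ∈ H. Then for every λ > 0 there exists a minimizer f_{L,P,λ} ∈ H of the regularized risk f ↦ R_{L,P}(f) + λ‖f‖_H². -/
open MeasureTheory
open scoped RealInnerProductSpace

open Filter Topology in
theorem weak_subseq_aux {H : Type*} [NormedAddCommGroup H] [InnerProductSpace ℝ H]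
    [CompleteSpace H] (u : ℕ → H) (R : ℝ) (hu : ∀ n, ‖u n‖ ≤ R) :
    ∃ (f : H) (φ : ℕ → ℕ), StrictMono φ ∧
      ∀ h : H, Tendsto (fun n => ⟪u (φ n), h⟫) atTop (𝓝 ⟪f, h⟫) := by
  let K : Submodule ℝ H := (Submodule.span ℝ (Set.range u)).topologicalClosure
  have hKc : IsClosed (K : Set H) := Submodule.isClosed_topologicalClosure _
  have : CompleteSpace K := hKc.completeSpace_coe
  have hKs : TopologicalSpace.IsSeparable (K : Set H) := by
    have h1 : TopologicalSpace.IsSeparable (Set.range u) :=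
      (Set.countable_range u).isSeparable
    have := (h1.span (R := ℝ)).closure
    simpa [K, Submodule.topologicalClosure_coe] using this
  have : TopologicalSpace.SeparableSpace K := hKs.separableSpace
  have hmem : ∀ n, u n ∈ K := fun n =>
    Submodule.le_topologicalClosure _ (Submodule.subset_span ⟨n, rfl⟩)
  let v : ℕ → K := fun n => ⟨u n, hmem n⟩
  have hv : ∀ n, ‖v n‖ ≤ R := hu
  let w : ℕ → WeakDual ℝ K := fun n =>
    StrongDual.toWeakDual (InnerProductSpace.toDual ℝ K (v n))
  have hw : ∀ n, w n ∈ (WeakDual.toStrongDual ⁻¹' Metric.closedBall (0 : StrongDual ℝ K) R :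
      Set (WeakDual ℝ K)) := by
    intro n
    have h1 : InnerProductSpace.toDual ℝ K (v n) ∈ Metric.closedBall (0 : StrongDual ℝ K) R := by
      refine mem_closedBall_zero_iff.2 ?_
      rw [LinearIsometryEquiv.norm_map]
      exact hv n
    exact h1
  obtain ⟨a, -, φ, hφ, ha⟩ := WeakDual.isSeqCompact_closedBall ℝ K 0 R hw
  let f : K := (InnerProductSpace.toDual ℝ K).symm (WeakDual.toStrongDual a)
  refine ⟨(f : H), φ, hφ, fun h => ?_⟩
  have key : ∀ g : K, ⟪(g : H), h⟫ = ⟪g, K.orthogonalProjectionOnto h⟫ := by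
    intro g
    simp
  have h2 : Tendsto (fun n => w (φ n) (K.orthogonalProjectionOnto h)) atTop
      (𝓝 (a (K.orthogonalProjectionOnto h))) :=
    ((WeakDual.eval_continuous (K.orthogonalProjectionOnto h)).tendsto a).comp ha
  rw [key f]
  have h3 : ⟪f, K.orthogonalProjectionOnto h⟫ = a (K.orthogonalProjectionOnto h) :=
    InnerProductSpace.toDual_symm_apply
  rw [h3]
  refine h2.congr fun n => ?_
  exact (key (v (φ n))).symm

open Filter Topology in
/-- **Existence of a regularized pairwise learning minimizer.** If `L` is a separately
Lipschitz continuous pairwise loss, `P` a probability measure on `X × Y`, `H` the RKHS of a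
bounded measurable kernel (feature map `Φ`, `‖Φ x‖ ≤ κ`, `f(x) = ⟪f, Φ x⟫`), and the `L`-risk
is finite at some `f₀ ∈ H`, then for every `λ > 0` there is a minimizer of
`f ↦ R_{L,P}(f) + λ‖f‖²_H` over `H`. -/
theorem rpl_exists_minimizer
    {X : Type*} [MeasurableSpace X] {Y : Set ℝ} (hY : IsClosed Y)
    (L : X → Y → X → Y → ℝ → ℝ → ℝ)
    (hL_nonneg : ∀ x y x' y' t t', 0 ≤ L x y x' y' t t')
    (hL_meas : Measurable fun p : (X × Y) × (X × Y) × ℝ × ℝ =>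
      L p.1.1 p.1.2 p.2.1.1 p.2.1.2 p.2.2.1 p.2.2.2)
    (L₁ : ℝ) (hL₁ : 0 ≤ L₁)
    (hLip : ∀ x y x' y' t₁ t₂ s₁ s₂,
      |L x y x' y' t₁ t₂ - L x y x' y' s₁ s₂| ≤ L₁ * (|t₁ - s₁| + |t₂ - s₂|))
    {H : Type*} [NormedAddCommGroup H] [InnerProductSpace ℝ H] [CompleteSpace H]
    (Φ : X → H) (κ : ℝ) (hκ : ∀ x, ‖Φ x‖ ≤ κ)
    (hΦmeas : ∀ f : H, Measurable fun x => ⟪f, Φ x⟫)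
    (P : Measure (X × Y)) [IsProbabilityMeasure P]
    (f₀ : H)
    (hf₀ : (∫⁻ z : (X × Y) × (X × Y), ENNReal.ofReal
        (L z.1.1 z.1.2 z.2.1 z.2.2 ⟪f₀, Φ z.1.1⟫ ⟪f₀, Φ z.2.1⟫) ∂(P.prod P)) < ⊤)
    (l : ℝ) (hl : 0 < l) :
    ∃ fmin : H, ∀ g : H,
      (∫⁻ z : (X × Y) × (X × Y), ENNReal.ofReal
          (L z.1.1 z.1.2 z.2.1 z.2.2 ⟪fmin, Φ z.1.1⟫ ⟪fmin, Φ z.2.1⟫) ∂(P.prod P))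
        + ENNReal.ofReal (l * ‖fmin‖ ^ 2)
      ≤ (∫⁻ z : (X × Y) × (X × Y), ENNReal.ofReal
          (L z.1.1 z.1.2 z.2.1 z.2.2 ⟪g, Φ z.1.1⟫ ⟪g, Φ z.2.1⟫) ∂(P.prod P))
        + ENNReal.ofReal (l * ‖g‖ ^ 2) := by
  classical
  let F : H → (X × Y) × (X × Y) → ENNReal := fun g z => ENNReal.ofReal
    (L z.1.1 z.1.2 z.2.1 z.2.2 ⟪g, Φ z.1.1⟫ ⟪g, Φ z.2.1⟫)
  let J : H → ENNReal := fun g => (∫⁻ z, F g z ∂(P.prod P)) + ENNReal.ofReal (l * ‖g‖ ^ 2)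
  change ∃ fmin : H, ∀ g : H, J fmin ≤ J g
  have hFm : ∀ g, Measurable (F g) := by
    intro g
    have hin : Measurable fun z : (X × Y) × (X × Y) =>
        ((z.1, z.2, ⟪g, Φ z.1.1⟫, ⟪g, Φ z.2.1⟫) : (X × Y) × (X × Y) × ℝ × ℝ) := by
      have h1 : Measurable fun z : (X × Y) × (X × Y) => ⟪g, Φ z.1.1⟫ :=
        (hΦmeas g).comp (measurable_fst.comp measurable_fst)
      have h2 : Measurable fun z : (X × Y) × (X × Y) => ⟪g, Φ z.2.1⟫ :=
        (hΦmeas g).comp (measurable_fst.comp measurable_snd)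
      exact measurable_fst.prodMk (measurable_snd.prodMk (h1.prodMk h2))
    exact (hL_meas.comp hin).ennreal_ofReal
  have hJ : ∀ g, J g = ∫⁻ z, (F g z + ENNReal.ofReal (l * ‖g‖ ^ 2)) ∂(P.prod P) := by
    intro g
    rw [lintegral_add_left (hFm g)]
    simp [J]
  have hJ0 : J f₀ < ⊤ := ENNReal.add_lt_top.2 ⟨hf₀, ENNReal.ofReal_lt_top⟩
  obtain ⟨B, hB⟩ : ∃ B : ENNReal, B = J f₀ + 1 := ⟨_, rfl⟩
  have hBt : B ≠ ⊤ := by rw [hB]; exact (ENNReal.add_lt_top.2 ⟨hJ0, ENNReal.one_lt_top⟩).ne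
  have hmB : (⨅ g, J g) < B := by
    refine lt_of_le_of_lt (iInf_le _ f₀) ?_
    rw [hB]
    exact ENNReal.lt_add_right hJ0.ne one_ne_zero
  obtain ⟨u₀, hu₀⟩ : ∃ u : ℕ → H, Tendsto (fun n => J (u n)) atTop (𝓝 (⨅ g, J g)) := by
    obtain ⟨s, -, hs, hs'⟩ := exists_seq_tendsto_sInf (S := Set.range J) ⟨_, ⟨f₀, rfl⟩⟩
      (OrderBot.bddBelow _)
    choose u hu using hs'
    exact ⟨u, by simpa [hu, sInf_range] using hs⟩
  obtain ⟨N, hN⟩ := eventually_atTop.1 (hu₀.eventually_lt_const hmB)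
  let u₁ : ℕ → H := fun n => u₀ (n + N)
  have hu₁ : Tendsto (fun n => J (u₁ n)) atTop (𝓝 (⨅ g, J g)) :=
    hu₀.comp (tendsto_add_atTop_nat N)
  have hbd : ∀ n, ‖u₁ n‖ ≤ Real.sqrt (B.toReal / l) := by
    intro n
    have h1 : ENNReal.ofReal (l * ‖u₁ n‖ ^ 2) ≤ B :=
      le_trans le_add_self (hN (n + N) (Nat.le_add_left _ _)).le
    have h2 := (ENNReal.ofReal_le_iff_le_toReal hBt).1 h1
    apply Real.le_sqrt_of_sq_le
    rw [le_div_iff₀ hl]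
    linarith
  obtain ⟨r, -, φ, hφ, hr⟩ := (isCompact_Icc (a := (0:ℝ))
    (b := Real.sqrt (B.toReal / l))).tendsto_subseq (x := fun n => ‖u₁ n‖)
    (fun n => ⟨norm_nonneg _, hbd n⟩)
  obtain ⟨f, ψ, hψ, hf⟩ := weak_subseq_aux (fun n => u₁ (φ n)) _ (fun n => hbd (φ n))
  let u : ℕ → H := fun n => u₁ (φ (ψ n))
  have huJ : Tendsto (fun n => J (u n)) atTop (𝓝 (⨅ g, J g)) :=
    hu₁.comp (hφ.tendsto_atTop.comp hψ.tendsto_atTop)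
  have hur : Tendsto (fun n => ‖u n‖) atTop (𝓝 r) := hr.comp hψ.tendsto_atTop
  have hfu : ∀ h, Tendsto (fun n => ⟪u n, h⟫) atTop (𝓝 ⟪f, h⟫) := hf
  have hr0 : 0 ≤ r := ge_of_tendsto' hur fun n => norm_nonneg _
  have hfr : ‖f‖ ≤ r := by
    have h1 : ⟪f, f⟫ ≤ r * ‖f‖ :=
      le_of_tendsto_of_tendsto' (hfu f) (hur.mul_const ‖f‖) fun n => real_inner_le_norm _ _
    rw [real_inner_self_eq_norm_mul_norm] at h1
    rcases (norm_nonneg f).eq_or_lt with h | h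
    · rw [← h]; exact hr0
    · exact le_of_mul_le_mul_right h1 h
  refine ⟨f, fun g => le_trans ?_ (iInf_le J g)⟩
  have hlim : ∀ z, Tendsto (fun n => F (u n) z + ENNReal.ofReal (l * ‖u n‖ ^ 2)) atTop
      (𝓝 (F f z + ENNReal.ofReal (l * r ^ 2))) := by
    intro z
    refine Tendsto.add ?_ (ENNReal.tendsto_ofReal ((hur.pow 2).const_mul l))
    refine ENNReal.tendsto_ofReal ?_
    have ha := hfu (Φ z.1.1)
    have hb := hfu (Φ z.2.1)
    rw [tendsto_iff_norm_sub_tendsto_zero] at ha hb ⊢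
    refine squeeze_zero (fun _ => norm_nonneg _) (fun n => hLip _ _ _ _ _ _ _ _) ?_
    simpa using (ha.add hb).const_mul L₁
  calc J f ≤ ∫⁻ z, (F f z + ENNReal.ofReal (l * r ^ 2)) ∂(P.prod P) := by
        rw [hJ f]
        refine lintegral_mono fun z => ?_
        gcongr
    _ = ∫⁻ z, liminf (fun n => F (u n) z + ENNReal.ofReal (l * ‖u n‖ ^ 2)) atTop ∂(P.prod P) :=
        lintegral_congr fun z => (hlim z).liminf_eq.symm
    _ ≤ liminf (fun n => ∫⁻ z, (F (u n) z + ENNReal.ofReal (l * ‖u n‖ ^ 2)) ∂(P.prod P)) atTop :=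
        lintegral_liminf_le fun n => (hFm (u n)).add_const _
    _ = ⨅ g, J g := by
        simp_rw [← hJ]
        exact huJ.liminf_eq
end

section
/- Let P be a Borel probability measure on X×Y, let L be a convex and locally separately Lipschitz continuous pairwise loss function with R_{L,P}(0) < ∞, and let H be the RKHS of a bounded measurable kernel over X. Then for every λ > 0 there exists a minimizer f_{L,P,λ} ∈ H of the regularized risk f ↦ R_{L,P}(f) + λ‖f‖_H². -/
open MeasureTheory
open scoped RealInnerProductSpace

theorem rpl_abstract_min {H : Type*} [NormedAddCommGroup H] [InnerProductSpace ℝ H]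
    [CompleteSpace H] (R : H → ℝ) (hR0 : ∀ f, 0 ≤ R f) (hRc : Continuous R)
    (hRm : ∀ f g, R ((1/2 : ℝ) • f + (1/2 : ℝ) • g) ≤ 1/2 * R f + 1/2 * R g)
    (l : ℝ) (hl : 0 < l) :
    ∃ f : H, ∀ g : H, R f + l * ‖f‖ ^ 2 ≤ R g + l * ‖g‖ ^ 2 := by
  set J : H → ℝ := fun f => R f + l * ‖f‖ ^ 2 with hJ
  have hJ0 : ∀ f, 0 ≤ J f := fun f => by
    have := hR0 f
    simp only [hJ]; positivity
  have hbdd : BddBelow (Set.range J) := ⟨0, by rintro _ ⟨f, rfl⟩; exact hJ0 f⟩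
  set m := ⨅ f, J f with hm
  have hle : ∀ f, m ≤ J f := fun f => ciInf_le hbdd f
  have hex : ∀ n : ℕ, ∃ f, J f < m + 1 / ((n : ℝ) + 1) := fun n =>
    exists_lt_of_ciInf_lt (lt_add_of_pos_right _ (by positivity))
  choose u hu using hex
  have hpar : ∀ f g : H, l * ‖f - g‖ ^ 2 ≤ 2 * (J f - m) + 2 * (J g - m) := by
    intro f g
    have h1 := hle ((1/2 : ℝ) • f + (1/2 : ℝ) • g)
    have h2 := hRm f g
    have h3 := parallelogram_law_with_norm ℝ f g
    have h4 : ‖(1/2 : ℝ) • f + (1/2 : ℝ) • g‖ = 1/2 * ‖f + g‖ := by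
      rw [← smul_add, norm_smul]; norm_num
    simp only [hJ, h4] at h1 ⊢
    have h5 : l * ‖f - g‖ ^ 2 = l * (2 * (‖f‖ ^ 2 + ‖g‖ ^ 2)) - l * ‖f + g‖ ^ 2 := by
      rw [← mul_sub]; congr 1; linarith
    rw [h5]
    ring_nf at h1 h2 ⊢
    linarith
  have hcau : CauchySeq u := by
    rw [Metric.cauchySeq_iff']
    intro ε hε
    obtain ⟨N, hN⟩ := exists_nat_one_div_lt (show 0 < l * ε ^ 2 / 4 by positivity)
    refine ⟨N, fun n hn => ?_⟩
    have h1 := hpar (u n) (u N)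
    have h2 := hu n
    have h3 := hu N
    have h4 : 1 / ((n : ℝ) + 1) ≤ 1 / ((N : ℝ) + 1) := Nat.one_div_le_one_div hn
    have h5 : l * ‖u n - u N‖ ^ 2 < l * ε ^ 2 := by linarith
    rw [dist_eq_norm]
    exact lt_of_pow_lt_pow_left₀ 2 hε.le (lt_of_mul_lt_mul_left h5 hl.le)
  obtain ⟨f, hf⟩ := cauchySeq_tendsto_of_complete hcau
  refine ⟨f, fun g => le_trans ?_ (hle g)⟩
  have hJc : Continuous J := by fun_prop
  have ht := (hJc.tendsto f).comp hf
  have ht2 : Filter.Tendsto (fun n : ℕ => m + 1 / ((n : ℝ) + 1)) Filter.atTop (nhds (m + 0)) :=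
    tendsto_const_nhds.add tendsto_one_div_add_atTop_nhds_zero_nat
  rw [add_zero] at ht2
  exact le_of_tendsto_of_tendsto' ht ht2 fun n => (hu n).le

/-- **Existence for convex, locally separately Lipschitz losses.** If `L` is a convex and
locally separately Lipschitz continuous pairwise loss with `R_{L,P}(0) < ∞`, and `H` is the
RKHS of a bounded measurable kernel (feature map `Φ`, `‖Φ x‖ ≤ κ`, `f(x) = ⟪f, Φ x⟫`), then
for every `λ > 0` there exists a minimizer of `f ↦ R_{L,P}(f) + λ‖f‖²_H` over `H`. -/
theorem rpl_exists_minimizer_convex_locallyLipschitz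
    {X : Type*} [MeasurableSpace X] {Y : Set ℝ} (hY : IsClosed Y)
    (L : X → Y → X → Y → ℝ → ℝ → ℝ)
    (hL_nonneg : ∀ x y x' y' t t', 0 ≤ L x y x' y' t t')
    (hL_meas : Measurable fun p : (X × Y) × (X × Y) × ℝ × ℝ =>
      L p.1.1 p.1.2 p.2.1.1 p.2.1.2 p.2.2.1 p.2.2.2)
    (hL_convex : ∀ x y x' y',
      ConvexOn ℝ Set.univ fun t : ℝ × ℝ => L x y x' y' t.1 t.2)
    (c : ℝ → ℝ)
    (hc_nonneg : ∀ b, 0 ≤ b → 0 ≤ c b)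
    (hLip : ∀ b, 0 ≤ b → ∀ t₁ t₂ s₁ s₂ : ℝ, |t₁| ≤ b → |t₂| ≤ b → |s₁| ≤ b → |s₂| ≤ b →
      ∀ x y x' y',
        |L x y x' y' t₁ t₂ - L x y x' y' s₁ s₂| ≤ c b * (|t₁ - s₁| + |t₂ - s₂|))
    {H : Type*} [NormedAddCommGroup H] [InnerProductSpace ℝ H] [CompleteSpace H]
    (Φ : X → H) (κ : ℝ) (hκ : ∀ x, ‖Φ x‖ ≤ κ)
    (hΦmeas : ∀ f : H, Measurable fun x => ⟪f, Φ x⟫)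
    (P : Measure (X × Y)) [IsProbabilityMeasure P]
    (hR0 : (∫⁻ z : (X × Y) × (X × Y), ENNReal.ofReal
        (L z.1.1 z.1.2 z.2.1 z.2.2 0 0) ∂(P.prod P)) < ⊤)
    (l : ℝ) (hl : 0 < l) :
    ∃ fmin : H, ∀ g : H,
      (∫⁻ z : (X × Y) × (X × Y), ENNReal.ofReal
          (L z.1.1 z.1.2 z.2.1 z.2.2 ⟪fmin, Φ z.1.1⟫ ⟪fmin, Φ z.2.1⟫) ∂(P.prod P))
        + ENNReal.ofReal (l * ‖fmin‖ ^ 2)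
      ≤ (∫⁻ z : (X × Y) × (X × Y), ENNReal.ofReal
          (L z.1.1 z.1.2 z.2.1 z.2.2 ⟪g, Φ z.1.1⟫ ⟪g, Φ z.2.1⟫) ∂(P.prod P))
        + ENNReal.ofReal (l * ‖g‖ ^ 2) := by
  set F : H → (X × Y) × (X × Y) → ℝ := fun f z =>
    L z.1.1 z.1.2 z.2.1 z.2.2 ⟪f, Φ z.1.1⟫ ⟪f, Φ z.2.1⟫ with hF
  have hF0 : ∀ f z, 0 ≤ F f z := fun f z => hL_nonneg _ _ _ _ _ _
  have hFm : ∀ f, Measurable (F f) := by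
    intro f
    have h1 : Measurable fun z : (X × Y) × (X × Y) => (⟪f, Φ z.1.1⟫ : ℝ) :=
      (hΦmeas f).comp (measurable_fst.comp measurable_fst)
    have h2 : Measurable fun z : (X × Y) × (X × Y) => (⟪f, Φ z.2.1⟫ : ℝ) :=
      (hΦmeas f).comp (measurable_fst.comp measurable_snd)
    exact hL_meas.comp (measurable_fst.prodMk (measurable_snd.prodMk (h1.prodMk h2)))
  set K := |κ| with hK
  have hK0 : 0 ≤ K := abs_nonneg _
  have hin : ∀ (f : H) x, |(⟪f, Φ x⟫ : ℝ)| ≤ K * ‖f‖ := by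
    intro f x
    calc |(⟪f, Φ x⟫ : ℝ)| ≤ ‖f‖ * ‖Φ x‖ := abs_real_inner_le_norm _ _
      _ ≤ ‖f‖ * K := by gcongr; exact (hκ x).trans (le_abs_self _)
      _ = K * ‖f‖ := mul_comm _ _
  have hdiff : ∀ (M : ℝ) (f g : H), 0 ≤ M → ‖f‖ ≤ M → ‖g‖ ≤ M → ∀ z,
      |F f z - F g z| ≤ c (K * M) * (2 * K) * ‖f - g‖ := by
    intro M f g hM hf hg z
    have hb : 0 ≤ K * M := by positivity
    have hf' : ∀ x, |(⟪f, Φ x⟫ : ℝ)| ≤ K * M := fun x => (hin f x).trans (by gcongr)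
    have hg' : ∀ x, |(⟪g, Φ x⟫ : ℝ)| ≤ K * M := fun x => (hin g x).trans (by gcongr)
    have h1 := hLip _ hb _ _ _ _ (hf' z.1.1) (hf' z.2.1) (hg' z.1.1) (hg' z.2.1)
      z.1.1 z.1.2 z.2.1 z.2.2
    rw [← inner_sub_left, ← inner_sub_left] at h1
    refine h1.trans ?_
    rw [mul_assoc]
    refine mul_le_mul_of_nonneg_left ?_ (hc_nonneg _ hb)
    linarith [hin (f - g) z.1.1, hin (f - g) z.2.1]
  have hI0 : Integrable (F 0) (P.prod P) := by
    refine ⟨(hFm 0).aestronglyMeasurable, ?_⟩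
    rw [hasFiniteIntegral_iff_ofReal (Filter.Eventually.of_forall (hF0 0))]
    simpa [hF] using hR0
  have hI : ∀ f, Integrable (F f) (P.prod P) := by
    intro f
    have h1 : Integrable (fun z => F f z - F 0 z) (P.prod P) :=
      Integrable.of_bound ((hFm f).sub (hFm 0)).aestronglyMeasurable _
        (Filter.Eventually.of_forall fun z => by
          rw [Real.norm_eq_abs]
          exact hdiff ‖f‖ f 0 (norm_nonneg _) le_rfl (by simp) z)
    have h2 := h1.add hI0
    refine h2.congr (Filter.Eventually.of_forall fun z => by simp)
  set R : H → ℝ := fun f => ∫ z, F f z ∂(P.prod P) with hR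
  have hRnn : ∀ f, 0 ≤ R f := fun f => integral_nonneg (hF0 f)
  have hRc : Continuous R := by
    rw [continuous_iff_continuousAt]
    intro f
    refine continuousAt_of_locally_lipschitz one_pos
      (c (K * (‖f‖ + 1)) * (2 * K)) fun g hg => ?_
    rw [dist_eq_norm] at hg
    have hgn : ‖g‖ ≤ ‖f‖ + 1 := by
      have := norm_le_norm_add_norm_sub' g f
      linarith
    have hb := hdiff (‖f‖ + 1) g f (by positivity) hgn (by linarith)
    rw [Real.dist_eq, dist_eq_norm, hR]
    simp only
    rw [← integral_sub (hI g) (hI f), ← Real.norm_eq_abs]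
    refine (norm_integral_le_of_norm_le_const (Filter.Eventually.of_forall hb)).trans ?_
    simp
  have hRm : ∀ f g, R ((1/2 : ℝ) • f + (1/2 : ℝ) • g) ≤ 1/2 * R f + 1/2 * R g := by
    intro f g
    simp only [hR]
    rw [← integral_const_mul, ← integral_const_mul,
      ← integral_add ((hI f).const_mul _) ((hI g).const_mul _)]
    refine integral_mono (hI _) (((hI f).const_mul _).add ((hI g).const_mul _)) fun z => ?_
    have := (hL_convex z.1.1 z.1.2 z.2.1 z.2.2).2
      (Set.mem_univ ((⟪f, Φ z.1.1⟫ : ℝ), (⟪f, Φ z.2.1⟫ : ℝ)))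
      (Set.mem_univ ((⟪g, Φ z.1.1⟫ : ℝ), (⟪g, Φ z.2.1⟫ : ℝ)))
      (show (0:ℝ) ≤ 1/2 by norm_num) (show (0:ℝ) ≤ 1/2 by norm_num) (by norm_num)
    simpa only [hF, inner_add_left, real_inner_smul_left, Prod.fst_add, Prod.snd_add,
      Prod.smul_fst, Prod.smul_snd, smul_eq_mul] using this
  obtain ⟨f, hf⟩ := rpl_abstract_min R hRnn hRc hRm l hl
  have key : ∀ g : H, (∫⁻ z : (X × Y) × (X × Y), ENNReal.ofReal
          (L z.1.1 z.1.2 z.2.1 z.2.2 ⟪g, Φ z.1.1⟫ ⟪g, Φ z.2.1⟫) ∂(P.prod P))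
        + ENNReal.ofReal (l * ‖g‖ ^ 2) = ENNReal.ofReal (R g + l * ‖g‖ ^ 2) := by
    intro g
    rw [ENNReal.ofReal_add (hRnn g) (by positivity), hR,
      ofReal_integral_eq_lintegral_ofReal (hI g) (Filter.Eventually.of_forall (hF0 g))]
  refine ⟨f, fun g => ?_⟩
  rw [key, key]
  exact ENNReal.ofReal_le_ofReal (hf g)
end

section
/- Let P be a Borel probability measure on X×Y, let L be a convex and separately Lipschitz continuous pairwise loss function with R_{L,P}(0) < ∞, and let H be the RKHS of a bounded measurable kernel over X. Then for every λ > 0 there exists a unique minimizer f_{L,P,λ} ∈ H of f ↦ R_{L,P}(f) + λ‖f‖_H², and it satisfies ‖f_{L,P,λ}‖_H ≤ (R_{L,P}(0)/λ)^{1/2}. -/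
open MeasureTheory
open scoped RealInnerProductSpace

lemma aux_min {H : Type*} [NormedAddCommGroup H] [InnerProductSpace ℝ H] [CompleteSpace H]
    (R : H → ℝ) (hR : ∀ f, 0 ≤ R f) (hc : Continuous R)
    (hm : ∀ f g, R ((1 / 2 : ℝ) • (f + g)) ≤ (R f + R g) / 2) (l : ℝ) (hl : 0 < l) :
    ∃ fmin : H, (∀ g, R fmin + l * ‖fmin‖ ^ 2 ≤ R g + l * ‖g‖ ^ 2) ∧
      (∀ f', (∀ g, R f' + l * ‖f'‖ ^ 2 ≤ R g + l * ‖g‖ ^ 2) → f' = fmin) ∧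
      ‖fmin‖ ≤ Real.sqrt (R 0 / l) := by
  set J : H → ℝ := fun f => R f + l * ‖f‖ ^ 2 with hJ
  have hJ0 : ∀ f, 0 ≤ J f := fun f => by have := hR f; simp only [hJ]; positivity
  have hJc : Continuous J := by simp only [hJ]; fun_prop
  have key : ∀ f g, J ((1 / 2 : ℝ) • (f + g)) + l / 4 * ‖f - g‖ ^ 2 ≤ (J f + J g) / 2 := by
    intro f g
    have h1 := parallelogram_law_with_norm ℝ f g
    have h2 : ‖(1 / 2 : ℝ) • (f + g)‖ = 1 / 2 * ‖f + g‖ := by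
      rw [norm_smul]; norm_num
    have h3 := hm f g
    simp only [hJ]
    rw [h2]
    have h4 : l * (‖f + g‖ ^ 2 + ‖f - g‖ ^ 2)
        = l * (2 * (‖f‖ ^ 2 + ‖g‖ ^ 2)) := by rw [h1]
    nlinarith
  have hbdd : BddBelow (Set.range J) := ⟨0, by rintro _ ⟨f, rfl⟩; exact hJ0 f⟩
  set m := ⨅ f, J f with hmdef
  have hmle : ∀ f, m ≤ J f := fun f => ciInf_le hbdd f
  have hex : ∀ n : ℕ, ∃ f, J f < m + 1 / ((n : ℝ) + 1) := fun n =>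
    exists_lt_of_ciInf_lt (by have : (0 : ℝ) < 1 / ((n : ℝ) + 1) := by positivity
                              linarith)
  choose u hu using hex
  have hlim : Filter.Tendsto (fun n : ℕ => m + 1 / ((n : ℝ) + 1)) Filter.atTop (nhds m) := by
    simpa using tendsto_one_div_add_atTop_nhds_zero_nat.const_add m
  have hcau : CauchySeq u := by
    rw [Metric.cauchySeq_iff]
    intro ε hε
    have hpos : 0 < l / 4 * ε ^ 2 := by positivity
    obtain ⟨N, hN⟩ := (hlim.eventually (gt_mem_nhds
      (show m < m + l / 4 * ε ^ 2 by linarith))).exists_forall_of_atTop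
    refine ⟨N, fun a ha b hb => ?_⟩
    have h1 := key (u a) (u b)
    have h2 := hmle ((1 / 2 : ℝ) • (u a + u b))
    have h3 := hu a
    have h4 := hu b
    have h5 := hN a ha
    have h6 := hN b hb
    have h7 : l / 4 * ‖u a - u b‖ ^ 2 < l / 4 * ε ^ 2 := by linarith
    have h8 : ‖u a - u b‖ ^ 2 < ε ^ 2 := lt_of_mul_lt_mul_left h7 (by positivity)
    rw [dist_eq_norm]
    exact lt_of_pow_lt_pow_left₀ 2 hε.le h8
  obtain ⟨f, hf⟩ := cauchySeq_tendsto_of_complete hcau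
  have hfm : J f ≤ m := le_of_tendsto_of_tendsto' ((hJc.tendsto f).comp hf) hlim
    (fun n => (hu n).le)
  refine ⟨f, fun g => hfm.trans (hmle g), fun f' hf' => ?_, ?_⟩
  · have h1 := key f' f
    have h2 := hmle ((1 / 2 : ℝ) • (f' + f))
    have h3 : J f' ≤ J f := hf' f
    have h4 : l / 4 * ‖f' - f‖ ^ 2 ≤ 0 := by linarith
    have h5 : ‖f' - f‖ ^ 2 ≤ 0 := by
      by_contra h
      push Not at h
      have : 0 < l / 4 * ‖f' - f‖ ^ 2 := by positivity
      linarith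
    have h6 : ‖f' - f‖ = 0 := by
      have := sq_nonneg ‖f' - f‖
      exact pow_eq_zero_iff (two_ne_zero) |>.1 (le_antisymm h5 this)
    exact sub_eq_zero.1 (norm_eq_zero.1 h6)
  · apply Real.le_sqrt_of_sq_le
    rw [le_div_iff₀ hl]
    have h1 : J f ≤ J 0 := hfm.trans (hmle 0)
    have h2 := hR f
    simp only [hJ, norm_zero] at h1
    nlinarith

/-- **Existence and uniqueness.** If `L` is a convex, separately Lipschitz continuous pairwise
loss with `R_{L,P}(0) < ∞`, and `H` is the RKHS of a bounded measurable kernel (feature map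
`Φ`, `‖Φ x‖ ≤ κ`, `f(x) = ⟪f, Φ x⟫`), then for every `λ > 0` there is a unique minimizer
`f_{L,P,λ}` of `f ↦ R_{L,P}(f) + λ‖f‖²_H`, and `‖f_{L,P,λ}‖_H ≤ (R_{L,P}(0)/λ)^{1/2}`. -/
theorem rpl_exists_unique_minimizer_norm_bound
    {X : Type*} [MeasurableSpace X] {Y : Set ℝ} (hY : IsClosed Y)
    (L : X → Y → X → Y → ℝ → ℝ → ℝ)
    (hL_nonneg : ∀ x y x' y' t t', 0 ≤ L x y x' y' t t')
    (hL_meas : Measurable fun p : (X × Y) × (X × Y) × ℝ × ℝ =>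
      L p.1.1 p.1.2 p.2.1.1 p.2.1.2 p.2.2.1 p.2.2.2)
    (hL_convex : ∀ x y x' y',
      ConvexOn ℝ Set.univ fun t : ℝ × ℝ => L x y x' y' t.1 t.2)
    (L₁ : ℝ) (hL₁ : 0 ≤ L₁)
    (hLip : ∀ x y x' y' t₁ t₂ s₁ s₂,
      |L x y x' y' t₁ t₂ - L x y x' y' s₁ s₂| ≤ L₁ * (|t₁ - s₁| + |t₂ - s₂|))
    {H : Type*} [NormedAddCommGroup H] [InnerProductSpace ℝ H] [CompleteSpace H]
    (Φ : X → H) (κ : ℝ) (hκ : ∀ x, ‖Φ x‖ ≤ κ)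
    (hΦmeas : ∀ f : H, Measurable fun x => ⟪f, Φ x⟫)
    (P : Measure (X × Y)) [IsProbabilityMeasure P]
    (hR0 : (∫⁻ z : (X × Y) × (X × Y), ENNReal.ofReal
        (L z.1.1 z.1.2 z.2.1 z.2.2 0 0) ∂(P.prod P)) < ⊤)
    (l : ℝ) (hl : 0 < l) :
    ∃ fmin : H,
      (∀ g : H,
        (∫⁻ z : (X × Y) × (X × Y), ENNReal.ofReal
            (L z.1.1 z.1.2 z.2.1 z.2.2 ⟪fmin, Φ z.1.1⟫ ⟪fmin, Φ z.2.1⟫) ∂(P.prod P))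
          + ENNReal.ofReal (l * ‖fmin‖ ^ 2)
        ≤ (∫⁻ z : (X × Y) × (X × Y), ENNReal.ofReal
            (L z.1.1 z.1.2 z.2.1 z.2.2 ⟪g, Φ z.1.1⟫ ⟪g, Φ z.2.1⟫) ∂(P.prod P))
          + ENNReal.ofReal (l * ‖g‖ ^ 2)) ∧
      (∀ f' : H,
        (∀ g : H,
          (∫⁻ z : (X × Y) × (X × Y), ENNReal.ofReal
              (L z.1.1 z.1.2 z.2.1 z.2.2 ⟪f', Φ z.1.1⟫ ⟪f', Φ z.2.1⟫) ∂(P.prod P))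
            + ENNReal.ofReal (l * ‖f'‖ ^ 2)
          ≤ (∫⁻ z : (X × Y) × (X × Y), ENNReal.ofReal
              (L z.1.1 z.1.2 z.2.1 z.2.2 ⟪g, Φ z.1.1⟫ ⟪g, Φ z.2.1⟫) ∂(P.prod P))
            + ENNReal.ofReal (l * ‖g‖ ^ 2)) → f' = fmin) ∧
      ‖fmin‖ ≤ Real.sqrt
        ((∫⁻ z : (X × Y) × (X × Y), ENNReal.ofReal
            (L z.1.1 z.1.2 z.2.1 z.2.2 0 0) ∂(P.prod P)).toReal / l) := by
  set F : H → (X × Y) × (X × Y) → ℝ := fun f z =>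
    L z.1.1 z.1.2 z.2.1 z.2.2 ⟪f, Φ z.1.1⟫ ⟪f, Φ z.2.1⟫ with hF
  have hF0 : ∀ f z, 0 ≤ F f z := fun f z => hL_nonneg _ _ _ _ _ _
  have hFm : ∀ f, Measurable (F f) := by
    intro f
    have hm1 := hΦmeas f
    have : Measurable fun z : (X × Y) × (X × Y) =>
        ((z.1, z.2, ⟪f, Φ z.1.1⟫, ⟪f, Φ z.2.1⟫) : (X × Y) × (X × Y) × ℝ × ℝ) :=
      measurable_fst.prodMk (measurable_snd.prodMk
        ((hm1.comp (measurable_fst.comp measurable_fst)).prodMk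
          (hm1.comp (measurable_fst.comp measurable_snd))))
    exact hL_meas.comp this
  have hdiff : ∀ f g z, |F f z - F g z| ≤ L₁ * (2 * κ) * ‖f - g‖ := by
    intro f g z
    have hi : ∀ x, |⟪f, Φ x⟫ - ⟪g, Φ x⟫| ≤ κ * ‖f - g‖ := by
      intro x
      rw [← inner_sub_left]
      calc _ ≤ ‖f - g‖ * ‖Φ x‖ := abs_real_inner_le_norm _ _
        _ ≤ ‖f - g‖ * κ := by gcongr; exact hκ x
        _ = _ := mul_comm _ _
    calc _ ≤ _ := hLip _ _ _ _ _ _ _ _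
      _ ≤ L₁ * (κ * ‖f - g‖ + κ * ‖f - g‖) := by
        gcongr
        · exact hi _
        · exact hi _
      _ = _ := by ring
  have hz : ∀ z, F 0 z = L z.1.1 z.1.2 z.2.1 z.2.2 0 0 := fun z => by simp [hF]
  have hI0 : Integrable (F 0) (P.prod P) := by
    refine ⟨(hFm 0).aestronglyMeasurable, ?_⟩
    rw [hasFiniteIntegral_iff_ofReal (Filter.Eventually.of_forall (hF0 0))]
    simpa only [hz] using hR0
  have hI : ∀ f, Integrable (F f) (P.prod P) := by
    intro f
    have h1 : Integrable (fun z => F f z - F 0 z) (P.prod P) :=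
      Integrable.of_bound ((hFm f).sub (hFm 0)).aestronglyMeasurable
        (L₁ * (2 * κ) * ‖f - 0‖) (Filter.Eventually.of_forall fun z => hdiff f 0 z)
    have h2 := h1.add hI0
    refine h2.congr (Filter.Eventually.of_forall fun z => ?_)
    simp
  set R : H → ℝ := fun f => ∫ z, F f z ∂(P.prod P) with hR
  have hRn : ∀ f, 0 ≤ R f := fun f => integral_nonneg (hF0 f)
  have hRl : ∀ f, ∫⁻ z, ENNReal.ofReal (F f z) ∂(P.prod P) = ENNReal.ofReal (R f) := fun f =>
    (ofReal_integral_eq_lintegral_ofReal (hI f) (Filter.Eventually.of_forall (hF0 f))).symm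
  have hRc : Continuous R := by
    refine (LipschitzWith.of_dist_le' (K := L₁ * (2 * κ)) fun f g => ?_).continuous
    rw [Real.dist_eq, dist_eq_norm]
    simp only [hR]
    rw [← integral_sub (hI f) (hI g)]
    have := norm_integral_le_of_norm_le_const (μ := P.prod P) (f := fun z => F f z - F g z)
      (C := L₁ * (2 * κ) * ‖f - g‖)
      (Filter.Eventually.of_forall fun z => hdiff f g z)
    simpa using this
  have hRm : ∀ f g, R ((1 / 2 : ℝ) • (f + g)) ≤ (R f + R g) / 2 := by
    intro f g
    have h1 : (R f + R g) / 2 = ∫ z, (F f z + F g z) / 2 ∂(P.prod P) := by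
      rw [integral_div, integral_add (hI f) (hI g)]
    rw [h1]
    refine integral_mono (hI _) (((hI f).add (hI g)).div_const 2) fun z => ?_
    have := (hL_convex z.1.1 z.1.2 z.2.1 z.2.2).2
      (Set.mem_univ ((⟪f, Φ z.1.1⟫, ⟪f, Φ z.2.1⟫) : ℝ × ℝ))
      (Set.mem_univ ((⟪g, Φ z.1.1⟫, ⟪g, Φ z.2.1⟫) : ℝ × ℝ))
      (show (0 : ℝ) ≤ 1 / 2 by norm_num) (show (0 : ℝ) ≤ 1 / 2 by norm_num) (by norm_num)
    simp only [Prod.fst_add, Prod.snd_add, Prod.smul_fst, Prod.smul_snd, smul_eq_mul] at this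
    simp only [hF, real_inner_smul_left, inner_add_left, mul_add]
    linarith
  have hsum : ∀ f, ∫⁻ z, ENNReal.ofReal (F f z) ∂(P.prod P) + ENNReal.ofReal (l * ‖f‖ ^ 2)
      = ENNReal.ofReal (R f + l * ‖f‖ ^ 2) := fun f => by
    rw [hRl, ENNReal.ofReal_add (hRn f) (by positivity)]
  have hJn : ∀ f, 0 ≤ R f + l * ‖f‖ ^ 2 := fun f => by have := hRn f; positivity
  obtain ⟨f, h1, h2, h3⟩ := aux_min R hRn hRc hRm l hl
  refine ⟨f, fun g => ?_, fun f' hf' => h2 f' fun g => ?_, ?_⟩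
  · have := ENNReal.ofReal_le_ofReal (h1 g)
    rw [← hsum, ← hsum] at this
    exact this
  · have : ∫⁻ z, ENNReal.ofReal (F f' z) ∂(P.prod P) + ENNReal.ofReal (l * ‖f'‖ ^ 2)
      ≤ ∫⁻ z, ENNReal.ofReal (F g z) ∂(P.prod P) + ENNReal.ofReal (l * ‖g‖ ^ 2) := hf' g
    rw [hsum, hsum] at this
    exact (ENNReal.ofReal_le_ofReal_iff (hJn g)).1 this
  · have h4 := hRl 0
    simp only [hz] at h4
    rw [h4, ENNReal.toReal_ofReal (hRn 0)]
    exact h3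
end

section
/- Let X be a complete separable metric space, Y ⊆ ℝ closed, k a continuous bounded kernel on X with RKHS H and feature map Φ, and let L be a pairwise loss function that is separately Lipschitz continuous, differentiable in its last two arguments with continuous partial derivatives D₅L, D₆L and second-order partial derivatives D_iD_jL (i,j ∈ {5,6}) uniformly bounded by constants c_{L,1}, c_{L,2}, and satisfies L(x,y,x,y,t,t) = 0. Let λ > 0, P a Borel probability measure on X×Y, and f_{L★,P,λ} ∈ H any minimizer of f ↦ R_{L★,P}(f) + λ‖f‖_H². Then, as an H-valued Bochner integral, f_{L★,P,λ} = −(1/(2λ)) · ∫ [ D₅L(x,y,x̃,ỹ,f_{L★,P,λ}(x),f_{L★,P,λ}(x̃))·Φ(x) + D₆L(x,y,x̃,ỹ,f_{L★,P,λ}(x),f_{L★,P,λ}(x̃))·Φ(x̃) ] dP²((x,y),(x̃,ỹ)). -/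
open MeasureTheory
open scoped RealInnerProductSpace

/-- The shifted risk `R_{L★,P}(f)` of the function `x ↦ ⟪f, Φ x⟫` induced by `f ∈ H`. -/
noncomputable def shiftedRisk {X : Type*} [MeasurableSpace X] {Y : Set ℝ}
    {H : Type*} [NormedAddCommGroup H] [InnerProductSpace ℝ H]
    (L : X → Y → X → Y → ℝ → ℝ → ℝ) (Φ : X → H)
    (P : Measure (X × Y)) (f : H) : ℝ :=
  ∫ z : (X × Y) × (X × Y),
    (L z.1.1 z.1.2 z.2.1 z.2.2 ⟪f, Φ z.1.1⟫ ⟪f, Φ z.2.1⟫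
      - L z.1.1 z.1.2 z.2.1 z.2.2 0 0) ∂(P.prod P)

/-- pointwise derivative of a measurable family is measurable -/
theorem rpl_aux_meas {Z : Type*} [MeasurableSpace Z] (F : Z → ℝ → ℝ) (F' : Z → ℝ)
    (hF : ∀ s, Measurable fun z => F z s) (hd : ∀ z, HasDerivAt (F z) (F' z) 0) :
    Measurable F' := by
  refine measurable_of_tendsto_metrizable
    (f := fun (n : ℕ) z => (1 / ((n : ℝ) + 1))⁻¹ • (F z (0 + 1 / ((n : ℝ) + 1)) - F z 0)) ?_ ?_
  · intro n
    exact ((hF _).sub (hF _)).const_smul ((1 / ((n : ℝ) + 1))⁻¹)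
  · rw [tendsto_pi_nhds]
    intro z
    have h := hasDerivAt_iff_tendsto_slope_zero.1 (hd z)
    refine h.comp (tendsto_nhdsWithin_iff.2 ⟨tendsto_one_div_add_atTop_nhds_zero_nat, ?_⟩)
    refine Filter.Eventually.of_forall fun n => ?_
    have : (0:ℝ) < 1 / ((n : ℝ) + 1) := by positivity
    exact this.ne'

/-- **Representer theorem for regularized pairwise learning.** Under Assumption 1 of the paper
(complete separable metric `X`, closed `Y ⊆ ℝ`, continuous bounded kernel with feature map `Φ`,
separately Lipschitz differentiable loss with continuous uniformly bounded first and second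
partial derivatives in the last two arguments, and `L(x,y,x,y,t,t) = 0`), any minimizer
`fmin` of the regularized shifted risk satisfies
`fmin = -(1/(2λ)) ∫ [D₅L(…) Φ(x) + D₆L(…) Φ(x̃)] dP²` as an `H`-valued Bochner integral. -/
theorem rpl_representer_theorem
    {X : Type*} [MeasurableSpace X] [MetricSpace X] [CompleteSpace X]
    [TopologicalSpace.SeparableSpace X] [BorelSpace X]
    {Y : Set ℝ} (hY : IsClosed Y)
    (L D₅L D₆L D₅₅L D₅₆L D₆₅L D₆₆L : X → Y → X → Y → ℝ → ℝ → ℝ)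
    (hL_nonneg : ∀ x y x' y' t t', 0 ≤ L x y x' y' t t')
    (hL_meas : Measurable fun p : (X × Y) × (X × Y) × ℝ × ℝ =>
      L p.1.1 p.1.2 p.2.1.1 p.2.1.2 p.2.2.1 p.2.2.2)
    (L₁ : ℝ) (hL₁ : 0 ≤ L₁)
    (hLip : ∀ x y x' y' t₁ t₂ s₁ s₂,
      |L x y x' y' t₁ t₂ - L x y x' y' s₁ s₂| ≤ L₁ * (|t₁ - s₁| + |t₂ - s₂|))
    (hderiv : ∀ x y x' y' t t', HasFDerivAt (fun p : ℝ × ℝ => L x y x' y' p.1 p.2)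
      ((D₅L x y x' y' t t') • ContinuousLinearMap.fst ℝ ℝ ℝ
        + (D₆L x y x' y' t t') • ContinuousLinearMap.snd ℝ ℝ ℝ) (t, t'))
    (hderiv₅ : ∀ x y x' y' t t', HasFDerivAt (fun p : ℝ × ℝ => D₅L x y x' y' p.1 p.2)
      ((D₅₅L x y x' y' t t') • ContinuousLinearMap.fst ℝ ℝ ℝ
        + (D₆₅L x y x' y' t t') • ContinuousLinearMap.snd ℝ ℝ ℝ) (t, t'))
    (hderiv₆ : ∀ x y x' y' t t', HasFDerivAt (fun p : ℝ × ℝ => D₆L x y x' y' p.1 p.2)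
      ((D₅₆L x y x' y' t t') • ContinuousLinearMap.fst ℝ ℝ ℝ
        + (D₆₆L x y x' y' t t') • ContinuousLinearMap.snd ℝ ℝ ℝ) (t, t'))
    (hcont₁ : ∀ x y x' y', Continuous (fun p : ℝ × ℝ => D₅L x y x' y' p.1 p.2) ∧
      Continuous (fun p : ℝ × ℝ => D₆L x y x' y' p.1 p.2))
    (hcont₂ : ∀ x y x' y', Continuous (fun p : ℝ × ℝ => D₅₅L x y x' y' p.1 p.2) ∧
      Continuous (fun p : ℝ × ℝ => D₅₆L x y x' y' p.1 p.2) ∧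
      Continuous (fun p : ℝ × ℝ => D₆₅L x y x' y' p.1 p.2) ∧
      Continuous (fun p : ℝ × ℝ => D₆₆L x y x' y' p.1 p.2))
    (cL₁ cL₂ : ℝ) (hcL₁ : 0 < cL₁) (hcL₂ : 0 < cL₂)
    (hbd₁ : ∀ x y x' y' t t', |D₅L x y x' y' t t'| ≤ cL₁ ∧ |D₆L x y x' y' t t'| ≤ cL₁)
    (hbd₂ : ∀ x y x' y' t t', |D₅₅L x y x' y' t t'| ≤ cL₂ ∧ |D₅₆L x y x' y' t t'| ≤ cL₂ ∧
      |D₆₅L x y x' y' t t'| ≤ cL₂ ∧ |D₆₆L x y x' y' t t'| ≤ cL₂)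
    (hzero : ∀ (x : X) (y : Y) (t : ℝ), L x y x y t t = 0)
    {H : Type*} [NormedAddCommGroup H] [InnerProductSpace ℝ H] [CompleteSpace H]
    (Φ : X → H) (hΦcont : Continuous Φ) (κ : ℝ) (hκ : ∀ x, ‖Φ x‖ ≤ κ)
    (P : Measure (X × Y)) [IsProbabilityMeasure P]
    (l : ℝ) (hl : 0 < l)
    (fmin : H)
    (hfmin : ∀ g : H, shiftedRisk L Φ P fmin + l * ‖fmin‖ ^ 2
      ≤ shiftedRisk L Φ P g + l * ‖g‖ ^ 2) :
    fmin = (-(1 / (2 * l))) • ∫ z : (X × Y) × (X × Y),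
      ((D₅L z.1.1 z.1.2 z.2.1 z.2.2 ⟪fmin, Φ z.1.1⟫ ⟪fmin, Φ z.2.1⟫) • Φ z.1.1
        + (D₆L z.1.1 z.1.2 z.2.1 z.2.2 ⟪fmin, Φ z.1.1⟫ ⟪fmin, Φ z.2.1⟫) • Φ z.2.1)
      ∂(P.prod P) := by
  have hΦm : StronglyMeasurable Φ := by
    haveI : SecondCountableTopology X := UniformSpace.secondCountable_of_separable X
    exact hΦcont.stronglyMeasurable
  have hΦ1 : StronglyMeasurable fun z : (X × Y) × (X × Y) => Φ z.1.1 :=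
    hΦm.comp_measurable (measurable_fst.comp measurable_fst)
  have hΦ2 : StronglyMeasurable fun z : (X × Y) × (X × Y) => Φ z.2.1 :=
    hΦm.comp_measurable (measurable_fst.comp measurable_snd)
  have hin1 : ∀ f : H, Measurable fun z : (X × Y) × (X × Y) => ⟪f, Φ z.1.1⟫ := fun f =>
    (StronglyMeasurable.inner stronglyMeasurable_const hΦ1).measurable
  have hin2 : ∀ f : H, Measurable fun z : (X × Y) × (X × Y) => ⟪f, Φ z.2.1⟫ := fun f =>
    (StronglyMeasurable.inner stronglyMeasurable_const hΦ2).measurable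
  have hLm : ∀ a b : (X × Y) × (X × Y) → ℝ, Measurable a → Measurable b →
      Measurable fun z => L z.1.1 z.1.2 z.2.1 z.2.2 (a z) (b z) := by
    intro a b ha hb
    exact hL_meas.comp (measurable_fst.prodMk (measurable_snd.prodMk (ha.prodMk hb)))
  -- chain rule along lines
  have hline : ∀ x y x' y' t t' u v, HasDerivAt (fun s : ℝ => L x y x' y' (t + s * u) (t' + s * v))
      (D₅L x y x' y' t t' * u + D₆L x y x' y' t t' * v) 0 := by
    intro x y x' y' t t' u v
    have h1 : HasDerivAt (fun s : ℝ => t + s * u) u 0 := by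
      simpa using ((hasDerivAt_id (0:ℝ)).mul_const u).const_add t
    have h2 : HasDerivAt (fun s : ℝ => t' + s * v) v 0 := by
      simpa using ((hasDerivAt_id (0:ℝ)).mul_const v).const_add t'
    have h3 := hderiv x y x' y' t t'
    have h4 := HasFDerivAt.comp_hasDerivAt_of_eq (0:ℝ) h3 (h1.prodMk h2) (by simp)
    simpa [Function.comp_def] using h4
  have hD5m : Measurable fun z : (X × Y) × (X × Y) =>
      D₅L z.1.1 z.1.2 z.2.1 z.2.2 ⟪fmin, Φ z.1.1⟫ ⟪fmin, Φ z.2.1⟫ := by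
    refine rpl_aux_meas (fun z s => L z.1.1 z.1.2 z.2.1 z.2.2
      (⟪fmin, Φ z.1.1⟫ + s * 1) (⟪fmin, Φ z.2.1⟫ + s * 0)) _ ?_ ?_
    · intro s
      exact hLm _ _ ((hin1 _).add_const _) ((hin2 _).add_const _)
    · intro z
      simpa only [mul_one, mul_zero, add_zero] using
        hline z.1.1 z.1.2 z.2.1 z.2.2 ⟪fmin, Φ z.1.1⟫ ⟪fmin, Φ z.2.1⟫ 1 0
  have hD6m : Measurable fun z : (X × Y) × (X × Y) =>
      D₆L z.1.1 z.1.2 z.2.1 z.2.2 ⟪fmin, Φ z.1.1⟫ ⟪fmin, Φ z.2.1⟫ := by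
    refine rpl_aux_meas (fun z s => L z.1.1 z.1.2 z.2.1 z.2.2
      (⟪fmin, Φ z.1.1⟫ + s * 0) (⟪fmin, Φ z.2.1⟫ + s * 1)) _ ?_ ?_
    · intro s
      exact hLm _ _ ((hin1 _).add_const _) ((hin2 _).add_const _)
    · intro z
      simpa only [mul_one, mul_zero, add_zero, zero_add] using
        hline z.1.1 z.1.2 z.2.1 z.2.2 ⟪fmin, Φ z.1.1⟫ ⟪fmin, Φ z.2.1⟫ 0 1
  have hκ' : ∀ (f : H) x, |⟪f, Φ x⟫| ≤ ‖f‖ * κ := fun f x =>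
    (abs_real_inner_le_norm f (Φ x)).trans (mul_le_mul_of_nonneg_left (hκ x) (norm_nonneg f))
  set G : (X × Y) × (X × Y) → H := fun z =>
      ((D₅L z.1.1 z.1.2 z.2.1 z.2.2 ⟪fmin, Φ z.1.1⟫ ⟪fmin, Φ z.2.1⟫) • Φ z.1.1
        + (D₆L z.1.1 z.1.2 z.2.1 z.2.2 ⟪fmin, Φ z.1.1⟫ ⟪fmin, Φ z.2.1⟫) • Φ z.2.1) with hG
  have hGm : StronglyMeasurable G :=
    (hD5m.stronglyMeasurable.smul hΦ1).add (hD6m.stronglyMeasurable.smul hΦ2)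
  have hGi : Integrable G (P.prod P) := by
    refine Integrable.of_bound hGm.aestronglyMeasurable (cL₁ * κ + cL₁ * κ)
      (Filter.Eventually.of_forall fun z => ?_)
    refine (norm_add_le _ _).trans (add_le_add ?_ ?_)
    · rw [norm_smul]
      exact mul_le_mul (hbd₁ _ _ _ _ _ _).1 (hκ _) (norm_nonneg _) hcL₁.le
    · rw [norm_smul]
      exact mul_le_mul (hbd₁ _ _ _ _ _ _).2 (hκ _) (norm_nonneg _) hcL₁.le
  have key : ∀ h : H, ⟪h, ∫ z, G z ∂(P.prod P)⟫ + l * (2 * ⟪fmin, h⟫) = 0 := by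
    intro h
    have hFm : ∀ f : H, Measurable fun z : (X × Y) × (X × Y) =>
        (L z.1.1 z.1.2 z.2.1 z.2.2 ⟪f, Φ z.1.1⟫ ⟪f, Φ z.2.1⟫
          - L z.1.1 z.1.2 z.2.1 z.2.2 0 0) := fun f =>
      (hLm _ _ (hin1 f) (hin2 f)).sub (hLm _ _ measurable_const measurable_const)
    have hR : HasDerivAt (fun s : ℝ => shiftedRisk L Φ P (fmin + s • h))
        (∫ z, ⟪h, G z⟫ ∂(P.prod P)) 0 := by
      unfold shiftedRisk
      refine (hasDerivAt_integral_of_dominated_loc_of_lip (s := Set.univ)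
        (bound := fun _ => L₁ * (‖h‖ * κ + ‖h‖ * κ)) Filter.univ_mem ?_ ?_ ?_ ?_ ?_ ?_).2
      · exact Filter.Eventually.of_forall fun s => (hFm _).aestronglyMeasurable
      · refine Integrable.of_bound (hFm _).aestronglyMeasurable
          (L₁ * (‖fmin + (0:ℝ) • h‖ * κ + ‖fmin + (0:ℝ) • h‖ * κ))
          (Filter.Eventually.of_forall fun z => ?_)
        refine (hLip _ _ _ _ _ _ _ _).trans (mul_le_mul_of_nonneg_left ?_ hL₁)
        rw [sub_zero, sub_zero]
        exact add_le_add (hκ' _ _) (hκ' _ _)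
      · exact (StronglyMeasurable.inner stronglyMeasurable_const hGm).aestronglyMeasurable
      · refine Filter.Eventually.of_forall fun z => ?_
        refine LipschitzOnWith.of_dist_le_mul fun s _ r _ => ?_
        have hκ0 : 0 ≤ κ := (norm_nonneg _).trans (hκ z.1.1)
        have hb : 0 ≤ L₁ * (‖h‖ * κ + ‖h‖ * κ) := by positivity
        rw [Real.dist_eq, Real.dist_eq, Real.coe_nnabs, abs_of_nonneg hb, sub_sub_sub_cancel_right]
        refine (hLip _ _ _ _ _ _ _ _).trans ?_
        rw [mul_assoc]
        refine mul_le_mul_of_nonneg_left ?_ hL₁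
        have e : ∀ x, |⟪fmin + s • h, Φ x⟫ - ⟪fmin + r • h, Φ x⟫| ≤ ‖h‖ * κ * |s - r| := by
          intro x
          have : ⟪fmin + s • h, Φ x⟫ - ⟪fmin + r • h, Φ x⟫ = ⟪h, Φ x⟫ * (s - r) := by
            simp only [inner_add_left, real_inner_smul_left]; ring
          rw [this, abs_mul]
          exact mul_le_mul_of_nonneg_right (hκ' _ _) (abs_nonneg _)
        rw [add_mul]
        exact add_le_add (e _) (e _)
      · exact integrable_const _
      · refine Filter.Eventually.of_forall fun z => ?_
        have := (hline z.1.1 z.1.2 z.2.1 z.2.2 ⟪fmin, Φ z.1.1⟫ ⟪fmin, Φ z.2.1⟫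
          ⟪h, Φ z.1.1⟫ ⟪h, Φ z.2.1⟫).sub_const (L z.1.1 z.1.2 z.2.1 z.2.2 0 0)
        simpa only [hG, inner_add_left, inner_add_right, real_inner_smul_left,
          real_inner_smul_right] using this
    have hN : HasDerivAt (fun s : ℝ => l * ‖fmin + s • h‖ ^ 2) (l * (2 * ⟪fmin, h⟫)) 0 := by
      have h1 : HasDerivAt (fun s : ℝ => fmin + s • h) h 0 := by
        simpa using ((hasDerivAt_id (0:ℝ)).smul_const h).const_add fmin
      simpa using h1.norm_sq.const_mul l
    have hmin : IsLocalMin (fun s : ℝ => shiftedRisk L Φ P (fmin + s • h)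
        + l * ‖fmin + s • h‖ ^ 2) 0 := by
      refine Filter.Eventually.of_forall fun s => ?_
      simpa using hfmin (fmin + s • h)
    have := hmin.hasDerivAt_eq_zero (hR.add hN)
    rwa [integral_inner hGi] at this
  have hz : (∫ z, G z ∂(P.prod P)) + (2 * l) • fmin = 0 := by
    refine ext_inner_left ℝ fun h => ?_
    rw [inner_add_right, real_inner_smul_right, inner_zero_right, ← key h, real_inner_comm h fmin]
    ring
  have hz' : (∫ z, G z ∂(P.prod P)) = -((2 * l) • fmin) := eq_neg_of_add_eq_zero_left hz
  rw [hz', smul_neg, neg_smul, neg_neg, smul_smul, one_div, inv_mul_cancel₀ (by positivity),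
    one_smul]
end

section
/- Under the assumptions of the representer theorem (X complete separable metric, Y ⊆ ℝ closed, k continuous bounded kernel with RKHS H and feature map Φ; L separately Lipschitz, differentiable with continuous, uniformly bounded first and second partial derivatives in the last two arguments, L(x,y,x,y,t,t) = 0), assume additionally that L is convex, so that for each Borel probability measure P the minimizer f_{L★,P,λ} of f ↦ R_{L★,P}(f) + λ‖f‖_H² exists uniquely. Define h_P(x,y,x̃,ỹ) := D₅L(x,y,x̃,ỹ,f_{L★,P,λ}(x),f_{L★,P,λ}(x̃))·Φ(x) + D₆L(x,y,x̃,ỹ,f_{L★,P,λ}(x),f_{L★,P,λ}(x̃))·Φ(x̃) ∈ H. Then for all Borel probability measures P, Q on X×Y: ‖f_{L★,P,λ} − f_{L★,Q,λ}‖_H ≤ (1/λ)·‖ ∫ h_P dP² − ∫ h_P dQ² ‖_H, where the integrals are H-valued Bochner integrals with respect to the product measures P² = P⊗P and Q² = Q⊗Q. -/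
open MeasureTheory
open scoped RealInnerProductSpace

lemma rpl_aux_convex (ℓ : ℝ → ℝ → ℝ) (a b t s t' s' : ℝ)
    (hc : ConvexOn ℝ Set.univ fun p : ℝ × ℝ => ℓ p.1 p.2)
    (hd : HasFDerivAt (fun p : ℝ × ℝ => ℓ p.1 p.2)
      (a • ContinuousLinearMap.fst ℝ ℝ ℝ + b • ContinuousLinearMap.snd ℝ ℝ ℝ) (t, s)) :
    a * (t' - t) + b * (s' - s) ≤ ℓ t' s' - ℓ t s := by
  have hline : HasDerivAt (fun r : ℝ => ((t, s) : ℝ × ℝ) + r • ((t' - t, s' - s) : ℝ × ℝ))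
      (t' - t, s' - s) 0 := by
    simpa using ((hasDerivAt_id (0:ℝ)).smul_const ((t' - t, s' - s) : ℝ × ℝ)).const_add (t, s)
  have hd' : HasFDerivAt (fun p : ℝ × ℝ => ℓ p.1 p.2)
      (a • ContinuousLinearMap.fst ℝ ℝ ℝ + b • ContinuousLinearMap.snd ℝ ℝ ℝ)
      (((t, s) : ℝ × ℝ) + (0:ℝ) • ((t' - t, s' - s) : ℝ × ℝ)) := by simpa using hd
  have h1 := hd'.comp_hasDerivAt (0:ℝ) hline
  have hcv : ConvexOn ℝ Set.univ (fun r : ℝ => ℓ (t + r * (t' - t)) (s + r * (s' - s))) := by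
    refine ⟨convex_univ, ?_⟩
    intro x _ y _ α β hα hβ hαβ
    have := hc.2 (Set.mem_univ (t + x * (t' - t), s + x * (s' - s)))
      (Set.mem_univ (t + y * (t' - t), s + y * (s' - s))) hα hβ hαβ
    simp only [Prod.smul_mk, Prod.mk_add_mk, smul_eq_mul] at this ⊢
    convert this using 2
    · linear_combination (-t) * hαβ
    · linear_combination (-s) * hαβ
  have h2 := hcv.le_slope_of_hasDerivAt (Set.mem_univ 0) (Set.mem_univ 1) zero_lt_one h1
  simpa [slope] using h2

lemma rpl_aux_meas_s14 {Z : Type*} [MeasurableSpace Z] (ℓ : Z → ℝ → ℝ → ℝ)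
    (hm : Measurable fun p : Z × ℝ × ℝ => ℓ p.1 p.2.1 p.2.2) (a b u v : Z → ℝ)
    (e₁ e₂ : ℝ)
    (hu : Measurable u) (hv : Measurable v)
    (hd : ∀ z, HasFDerivAt (fun p : ℝ × ℝ => ℓ z p.1 p.2)
      (a z • ContinuousLinearMap.fst ℝ ℝ ℝ + b z • ContinuousLinearMap.snd ℝ ℝ ℝ) (u z, v z)) :
    Measurable (fun z => a z * e₁ + b z * e₂) := by
  have key : ∀ z, HasDerivAt (fun r : ℝ => ℓ z (u z + r * e₁) (v z + r * e₂))
      (a z * e₁ + b z * e₂) 0 := by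
    intro z
    have hline : HasDerivAt (fun r : ℝ => ((u z, v z) : ℝ × ℝ) + r • ((e₁, e₂) : ℝ × ℝ))
        (e₁, e₂) 0 := by
      simpa using ((hasDerivAt_id (0:ℝ)).smul_const ((e₁, e₂) : ℝ × ℝ)).const_add (u z, v z)
    have hd' : HasFDerivAt (fun p : ℝ × ℝ => ℓ z p.1 p.2)
        (a z • ContinuousLinearMap.fst ℝ ℝ ℝ + b z • ContinuousLinearMap.snd ℝ ℝ ℝ)
        (((u z, v z) : ℝ × ℝ) + (0:ℝ) • ((e₁, e₂) : ℝ × ℝ)) := by simpa using hd z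
    have h1 := hd'.comp_hasDerivAt (0:ℝ) hline
    simpa [Function.comp_def] using h1
  refine measurable_of_tendsto_metrizable
    (f := fun (n : ℕ) z => ((1:ℝ) / ((n:ℝ) + 1))⁻¹ *
      (ℓ z (u z + (1 / ((n:ℝ) + 1)) * e₁) (v z + (1 / ((n:ℝ) + 1)) * e₂) - ℓ z (u z) (v z)))
    ?_ ?_
  · intro n
    refine Measurable.const_mul (Measurable.sub ?_ ?_) _
    · exact hm.comp (measurable_id.prodMk ((hu.add_const _).prodMk (hv.add_const _)))
    · exact hm.comp (measurable_id.prodMk (hu.prodMk hv))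
  · rw [tendsto_pi_nhds]
    intro z
    have h := hasDerivAt_iff_tendsto_slope_zero.1 (key z)
    have h0 : Filter.Tendsto (fun n : ℕ => (1:ℝ) / ((n:ℝ) + 1)) Filter.atTop
        (nhdsWithin 0 {0}ᶜ) := by
      refine tendsto_nhdsWithin_iff.2 ⟨tendsto_one_div_add_atTop_nhds_zero_nat, ?_⟩
      refine Filter.Eventually.of_forall fun n => ?_
      have : (0:ℝ) < 1 / ((n:ℝ) + 1) := by positivity
      exact this.ne'
    simpa [Function.comp_def] using h.comp h0

section
variable {Z : Type*} [MeasurableSpace Z] {H : Type*} [NormedAddCommGroup H]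
  [InnerProductSpace ℝ H] [CompleteSpace H]

lemma rpl_aux_int_h (ℓ D₅ D₆ : Z → ℝ → ℝ → ℝ)
    (hm : Measurable fun p : Z × ℝ × ℝ => ℓ p.1 p.2.1 p.2.2)
    (hd : ∀ z t t', HasFDerivAt (fun p : ℝ × ℝ => ℓ z p.1 p.2)
      (D₅ z t t' • ContinuousLinearMap.fst ℝ ℝ ℝ
        + D₆ z t t' • ContinuousLinearMap.snd ℝ ℝ ℝ) (t, t'))
    (c : ℝ) (hb : ∀ z t t', |D₅ z t t'| ≤ c ∧ |D₆ z t t'| ≤ c)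
    (A B : Z → H) (hA : StronglyMeasurable A) (hB : StronglyMeasurable B)
    (κ : ℝ) (hAκ : ∀ z, ‖A z‖ ≤ κ) (hBκ : ∀ z, ‖B z‖ ≤ κ) (hAm : ∀ f : H, Measurable fun z => ⟪f, A z⟫)
    (hBm : ∀ f : H, Measurable fun z => ⟪f, B z⟫) (f : H)
    (μ : Measure Z) [IsProbabilityMeasure μ] :
    Integrable (fun z => D₅ z ⟪f, A z⟫ ⟪f, B z⟫ • A z + D₆ z ⟪f, A z⟫ ⟪f, B z⟫ • B z) μ := by
  have m5 := rpl_aux_meas_s14 ℓ hm (fun z => D₅ z ⟪f, A z⟫ ⟪f, B z⟫)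
    (fun z => D₆ z ⟪f, A z⟫ ⟪f, B z⟫) _ _ 1 0 (hAm f) (hBm f) (fun z => hd z _ _)
  have m6 := rpl_aux_meas_s14 ℓ hm (fun z => D₅ z ⟪f, A z⟫ ⟪f, B z⟫)
    (fun z => D₆ z ⟪f, A z⟫ ⟪f, B z⟫) _ _ 0 1 (hAm f) (hBm f) (fun z => hd z _ _)
  simp only [mul_one, mul_zero, add_zero, zero_add] at m5 m6
  refine Integrable.of_bound (C := c * κ + c * κ)
    ((m5.stronglyMeasurable.smul hA).add (m6.stronglyMeasurable.smul hB)).aestronglyMeasurable ?_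
  refine Filter.Eventually.of_forall fun z => ?_
  refine (norm_add_le _ _).trans ?_
  rw [norm_smul, norm_smul, Real.norm_eq_abs, Real.norm_eq_abs]
  have h := hb z ⟪f, A z⟫ ⟪f, B z⟫
  have hc : 0 ≤ c := (abs_nonneg _).trans h.1
  exact add_le_add (mul_le_mul h.1 (hAκ z) (norm_nonneg _) hc)
    (mul_le_mul h.2 (hBκ z) (norm_nonneg _) hc)

lemma rpl_aux_int_L (ℓ : Z → ℝ → ℝ → ℝ)
    (hm : Measurable fun p : Z × ℝ × ℝ => ℓ p.1 p.2.1 p.2.2)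
    (L₁ : ℝ) (hL₁ : 0 ≤ L₁)
    (hLip : ∀ z t₁ t₂ s₁ s₂, |ℓ z t₁ t₂ - ℓ z s₁ s₂| ≤ L₁ * (|t₁ - s₁| + |t₂ - s₂|))
    (A B : Z → H)
    (κ : ℝ) (hAκ : ∀ z, ‖A z‖ ≤ κ) (hBκ : ∀ z, ‖B z‖ ≤ κ) (hAm : ∀ f : H, Measurable fun z => ⟪f, A z⟫)
    (hBm : ∀ f : H, Measurable fun z => ⟪f, B z⟫) (f : H)
    (μ : Measure Z) [IsProbabilityMeasure μ] :
    Integrable (fun z => ℓ z ⟪f, A z⟫ ⟪f, B z⟫ - ℓ z 0 0) μ := by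
  have m1 : Measurable (fun z => ℓ z ⟪f, A z⟫ ⟪f, B z⟫ - ℓ z 0 0) :=
    (hm.comp (measurable_id.prodMk ((hAm f).prodMk (hBm f)))).sub
      (hm.comp (measurable_id.prodMk (measurable_const.prodMk measurable_const)))
  refine Integrable.of_bound (C := L₁ * (‖f‖ * κ + ‖f‖ * κ)) m1.aestronglyMeasurable ?_
  refine Filter.Eventually.of_forall fun z => ?_
  refine (hLip z _ _ _ _).trans ?_
  rw [sub_zero, sub_zero]
  have h1 := (abs_real_inner_le_norm f (A z)).trans
    (mul_le_mul_of_nonneg_left (hAκ z) (norm_nonneg f))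
  have h2 := (abs_real_inner_le_norm f (B z)).trans
    (mul_le_mul_of_nonneg_left (hBκ z) (norm_nonneg f))
  gcongr

lemma rpl_aux_foc (ℓ D₅ D₆ : Z → ℝ → ℝ → ℝ)
    (hm : Measurable fun p : Z × ℝ × ℝ => ℓ p.1 p.2.1 p.2.2)
    (L₁ : ℝ) (hL₁ : 0 ≤ L₁)
    (hLip : ∀ z t₁ t₂ s₁ s₂, |ℓ z t₁ t₂ - ℓ z s₁ s₂| ≤ L₁ * (|t₁ - s₁| + |t₂ - s₂|))
    (hd : ∀ z t t', HasFDerivAt (fun p : ℝ × ℝ => ℓ z p.1 p.2)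
      (D₅ z t t' • ContinuousLinearMap.fst ℝ ℝ ℝ
        + D₆ z t t' • ContinuousLinearMap.snd ℝ ℝ ℝ) (t, t'))
    (c : ℝ) (hb : ∀ z t t', |D₅ z t t'| ≤ c ∧ |D₆ z t t'| ≤ c)
    (A B : Z → H) (hA : StronglyMeasurable A) (hB : StronglyMeasurable B)
    (κ : ℝ) (hAκ : ∀ z, ‖A z‖ ≤ κ) (hBκ : ∀ z, ‖B z‖ ≤ κ) (hAm : ∀ f : H, Measurable fun z => ⟪f, A z⟫)
    (hBm : ∀ f : H, Measurable fun z => ⟪f, B z⟫) (f d : H)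
    (μ : Measure Z) [IsProbabilityMeasure μ] (l : ℝ)
    (hf : ∀ g : H, (∫ z, (ℓ z ⟪f, A z⟫ ⟪f, B z⟫ - ℓ z 0 0) ∂μ) + l * ‖f‖ ^ 2 ≤
      (∫ z, (ℓ z ⟪g, A z⟫ ⟪g, B z⟫ - ℓ z 0 0) ∂μ) + l * ‖g‖ ^ 2) :
    ⟪d, ∫ z, (D₅ z ⟪f, A z⟫ ⟪f, B z⟫ • A z + D₆ z ⟪f, A z⟫ ⟪f, B z⟫ • B z) ∂μ⟫
      + 2 * l * ⟪f, d⟫ = 0 := by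
  have ih : ∀ g : H, _ := fun g =>
    rpl_aux_int_h ℓ D₅ D₆ hm hd c hb A B hA hB κ hAκ hBκ hAm hBm g μ
  have iL : ∀ g : H, _ := fun g =>
    rpl_aux_int_L ℓ hm L₁ hL₁ hLip A B κ hAκ hBκ hAm hBm g μ
  have hD := (hasDerivAt_integral_of_dominated_loc_of_deriv_le (μ := μ) (𝕜 := ℝ)
    (F := fun (r : ℝ) z => ℓ z ⟪f + r • d, A z⟫ ⟪f + r • d, B z⟫ - ℓ z 0 0)
    (F' := fun (r : ℝ) z => ⟪d, D₅ z ⟪f + r • d, A z⟫ ⟪f + r • d, B z⟫ • A z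
      + D₆ z ⟪f + r • d, A z⟫ ⟪f + r • d, B z⟫ • B z⟫) (x₀ := 0) (s := Set.univ)
    (bound := fun _ => ‖d‖ * (c * κ + c * κ))
    Filter.univ_mem
    (Filter.Eventually.of_forall fun r => (iL (f + r • d)).aestronglyMeasurable)
    (iL _) ((ih _).const_inner d).aestronglyMeasurable
    (Filter.Eventually.of_forall fun z r _ => by
      refine (norm_inner_le_norm _ _).trans ?_
      refine mul_le_mul_of_nonneg_left ?_ (norm_nonneg d)
      refine (norm_add_le _ _).trans ?_
      rw [norm_smul, norm_smul, Real.norm_eq_abs, Real.norm_eq_abs]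
      have h := hb z ⟪f + r • d, A z⟫ ⟪f + r • d, B z⟫
      have hc : 0 ≤ c := (abs_nonneg _).trans h.1
      exact add_le_add (mul_le_mul h.1 (hAκ z) (norm_nonneg _) hc)
        (mul_le_mul h.2 (hBκ z) (norm_nonneg _) hc))
    (integrable_const _)
    (Filter.Eventually.of_forall fun z r _ => by
      have hlin : ∀ w : H, HasDerivAt (fun r : ℝ => ⟪f + r • d, w⟫) ⟪d, w⟫ r := by
        intro w
        have : (fun r : ℝ => ⟪f + r • d, w⟫) = fun r : ℝ => ⟪f, w⟫ + r * ⟪d, w⟫ := by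
          funext r
          rw [inner_add_left, real_inner_smul_left]
        rw [this]
        simpa using ((hasDerivAt_id r).mul_const ⟪d, w⟫).const_add ⟪f, w⟫
      have h1 := (hd z ⟪f + r • d, A z⟫ ⟪f + r • d, B z⟫).comp_hasDerivAt r
        ((hlin (A z)).prodMk (hlin (B z)))
      have h2 := h1.sub_const (ℓ z 0 0)
      simpa [inner_add_right, real_inner_smul_right, Function.comp_def] using h2)).2
  have hN : HasDerivAt (fun r : ℝ => l * ‖f + r • d‖ ^ 2) (2 * l * ⟪f, d⟫) 0 := by
    have : (fun r : ℝ => l * ‖f + r • d‖ ^ 2)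
        = fun r : ℝ => l * (‖f‖ ^ 2 + r * (2 * ⟪f, d⟫) + r ^ 2 * ‖d‖ ^ 2) := by
      funext r
      rw [norm_add_sq_real, norm_smul, mul_pow, real_inner_smul_right, Real.norm_eq_abs, sq_abs]
      ring
    rw [this]
    have := ((((hasDerivAt_id (0:ℝ)).mul_const (2 * ⟪f, d⟫)).const_add (‖f‖ ^ 2)).add
      (((hasDerivAt_id (0:ℝ)).pow 2).mul_const (‖d‖ ^ 2))).const_mul l
    refine HasDerivAt.congr_deriv (f' := _) this ?_
    norm_num
    ring
  have hmin : IsLocalMin (fun r : ℝ =>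
      (∫ z, (ℓ z ⟪f + r • d, A z⟫ ⟪f + r • d, B z⟫ - ℓ z 0 0) ∂μ) + l * ‖f + r • d‖ ^ 2) 0 := by
    refine Filter.Eventually.of_forall fun r => ?_
    simpa using hf (f + r • d)
  have h0 := hmin.hasDerivAt_eq_zero (hD.add hN)
  rw [integral_inner (ih _)] at h0
  simpa using h0

lemma rpl_aux_main (ℓ D₅ D₆ : Z → ℝ → ℝ → ℝ)
    (hm : Measurable fun p : Z × ℝ × ℝ => ℓ p.1 p.2.1 p.2.2)
    (L₁ : ℝ) (hL₁ : 0 ≤ L₁)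
    (hLip : ∀ z t₁ t₂ s₁ s₂, |ℓ z t₁ t₂ - ℓ z s₁ s₂| ≤ L₁ * (|t₁ - s₁| + |t₂ - s₂|))
    (hd : ∀ z t t', HasFDerivAt (fun p : ℝ × ℝ => ℓ z p.1 p.2)
      (D₅ z t t' • ContinuousLinearMap.fst ℝ ℝ ℝ
        + D₆ z t t' • ContinuousLinearMap.snd ℝ ℝ ℝ) (t, t'))
    (hcv : ∀ z, ConvexOn ℝ Set.univ fun p : ℝ × ℝ => ℓ z p.1 p.2)
    (c : ℝ) (hb : ∀ z t t', |D₅ z t t'| ≤ c ∧ |D₆ z t t'| ≤ c)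
    (A B : Z → H) (hA : StronglyMeasurable A) (hB : StronglyMeasurable B)
    (κ : ℝ) (hAκ : ∀ z, ‖A z‖ ≤ κ) (hBκ : ∀ z, ‖B z‖ ≤ κ) (hAm : ∀ f : H, Measurable fun z => ⟪f, A z⟫)
    (hBm : ∀ f : H, Measurable fun z => ⟪f, B z⟫) (f g : H)
    (μ ν : Measure Z) [IsProbabilityMeasure μ] [IsProbabilityMeasure ν] (l : ℝ) (hl : 0 < l)
    (hf : ∀ g : H, (∫ z, (ℓ z ⟪f, A z⟫ ⟪f, B z⟫ - ℓ z 0 0) ∂μ) + l * ‖f‖ ^ 2 ≤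
      (∫ z, (ℓ z ⟪g, A z⟫ ⟪g, B z⟫ - ℓ z 0 0) ∂μ) + l * ‖g‖ ^ 2)
    (hg : (∫ z, (ℓ z ⟪g, A z⟫ ⟪g, B z⟫ - ℓ z 0 0) ∂ν) + l * ‖g‖ ^ 2 ≤
      (∫ z, (ℓ z ⟪f, A z⟫ ⟪f, B z⟫ - ℓ z 0 0) ∂ν) + l * ‖f‖ ^ 2) :
    ‖f - g‖ ≤ (1 / l) *
      ‖(∫ z, (D₅ z ⟪f, A z⟫ ⟪f, B z⟫ • A z + D₆ z ⟪f, A z⟫ ⟪f, B z⟫ • B z) ∂μ)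
       - ∫ z, (D₅ z ⟪f, A z⟫ ⟪f, B z⟫ • A z + D₆ z ⟪f, A z⟫ ⟪f, B z⟫ • B z) ∂ν‖ := by
  have h1 := rpl_aux_foc ℓ D₅ D₆ hm L₁ hL₁ hLip hd c hb A B hA hB κ hAκ hBκ hAm hBm f (g - f) μ l hf
  have ih := rpl_aux_int_h ℓ D₅ D₆ hm hd c hb A B hA hB κ hAκ hBκ hAm hBm f ν
  have h2 : ⟪g - f, ∫ z, (D₅ z ⟪f, A z⟫ ⟪f, B z⟫ • A z + D₆ z ⟪f, A z⟫ ⟪f, B z⟫ • B z) ∂ν⟫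
      ≤ (∫ z, (ℓ z ⟪g, A z⟫ ⟪g, B z⟫ - ℓ z 0 0) ∂ν)
        - ∫ z, (ℓ z ⟪f, A z⟫ ⟪f, B z⟫ - ℓ z 0 0) ∂ν := by
    have i1 := rpl_aux_int_L ℓ hm L₁ hL₁ hLip A B κ hAκ hBκ hAm hBm g ν
    have i2 := rpl_aux_int_L ℓ hm L₁ hL₁ hLip A B κ hAκ hBκ hAm hBm f ν
    rw [← integral_inner ih, ← integral_sub i1 i2]
    refine integral_mono (ih.const_inner _) (i1.sub i2) fun z => ?_
    have := rpl_aux_convex (ℓ z) _ _ _ _ ⟪g, A z⟫ ⟪g, B z⟫ (hcv z) (hd z ⟪f, A z⟫ ⟪f, B z⟫)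
    simp only [inner_add_right, real_inner_smul_right, inner_sub_left]
    linarith
  set I := ∫ z, (D₅ z ⟪f, A z⟫ ⟪f, B z⟫ • A z + D₆ z ⟪f, A z⟫ ⟪f, B z⟫ • B z) ∂μ
  set J := ∫ z, (D₅ z ⟪f, A z⟫ ⟪f, B z⟫ • A z + D₆ z ⟪f, A z⟫ ⟪f, B z⟫ • B z) ∂ν
  have h3 : ‖g‖ ^ 2 = ‖f‖ ^ 2 + 2 * ⟪f, g - f⟫ + ‖g - f‖ ^ 2 := by
    rw [← norm_add_sq_real]; congr 2; abel
  have h4 : l * ‖g - f‖ ^ 2 ≤ ‖g - f‖ * ‖I - J‖ := by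
    have h5 := real_inner_le_norm (g - f) (I - J)
    rw [inner_sub_right] at h5
    rw [h3] at hg
    nlinarith
  rw [norm_sub_rev, one_div, ← div_eq_inv_mul, le_div_iff₀ hl]
  rcases (norm_nonneg (g - f)).eq_or_lt with h | h
  · rw [← h]; simp
  · nlinarith
end

/-- **Stability part of the representer theorem.** Under Assumption 1 of the paper and
convexity of the loss, for all probability measures `P`, `Q` with (unique) minimizers
`fP`, `fQ` of the regularized shifted risks, one has
`‖fP - fQ‖_H ≤ (1/λ) ‖∫ h_P dP² - ∫ h_P dQ²‖_H`, where
`h_P(x,y,x̃,ỹ) = D₅L(…,fP(x),fP(x̃)) Φ(x) + D₆L(…,fP(x),fP(x̃)) Φ(x̃)`. -/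
theorem rpl_representer_stability
    {X : Type*} [MeasurableSpace X] [MetricSpace X] [CompleteSpace X]
    [TopologicalSpace.SeparableSpace X] [BorelSpace X]
    {Y : Set ℝ} (hY : IsClosed Y)
    (L D₅L D₆L D₅₅L D₅₆L D₆₅L D₆₆L : X → Y → X → Y → ℝ → ℝ → ℝ)
    (hL_nonneg : ∀ x y x' y' t t', 0 ≤ L x y x' y' t t')
    (hL_meas : Measurable fun p : (X × Y) × (X × Y) × ℝ × ℝ =>
      L p.1.1 p.1.2 p.2.1.1 p.2.1.2 p.2.2.1 p.2.2.2)
    (L₁ : ℝ) (hL₁ : 0 ≤ L₁)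
    (hLip : ∀ x y x' y' t₁ t₂ s₁ s₂,
      |L x y x' y' t₁ t₂ - L x y x' y' s₁ s₂| ≤ L₁ * (|t₁ - s₁| + |t₂ - s₂|))
    (hderiv : ∀ x y x' y' t t', HasFDerivAt (fun p : ℝ × ℝ => L x y x' y' p.1 p.2)
      ((D₅L x y x' y' t t') • ContinuousLinearMap.fst ℝ ℝ ℝ
        + (D₆L x y x' y' t t') • ContinuousLinearMap.snd ℝ ℝ ℝ) (t, t'))
    (hderiv₅ : ∀ x y x' y' t t', HasFDerivAt (fun p : ℝ × ℝ => D₅L x y x' y' p.1 p.2)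
      ((D₅₅L x y x' y' t t') • ContinuousLinearMap.fst ℝ ℝ ℝ
        + (D₆₅L x y x' y' t t') • ContinuousLinearMap.snd ℝ ℝ ℝ) (t, t'))
    (hderiv₆ : ∀ x y x' y' t t', HasFDerivAt (fun p : ℝ × ℝ => D₆L x y x' y' p.1 p.2)
      ((D₅₆L x y x' y' t t') • ContinuousLinearMap.fst ℝ ℝ ℝ
        + (D₆₆L x y x' y' t t') • ContinuousLinearMap.snd ℝ ℝ ℝ) (t, t'))
    (hcont₁ : ∀ x y x' y', Continuous (fun p : ℝ × ℝ => D₅L x y x' y' p.1 p.2) ∧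
      Continuous (fun p : ℝ × ℝ => D₆L x y x' y' p.1 p.2))
    (hcont₂ : ∀ x y x' y', Continuous (fun p : ℝ × ℝ => D₅₅L x y x' y' p.1 p.2) ∧
      Continuous (fun p : ℝ × ℝ => D₅₆L x y x' y' p.1 p.2) ∧
      Continuous (fun p : ℝ × ℝ => D₆₅L x y x' y' p.1 p.2) ∧
      Continuous (fun p : ℝ × ℝ => D₆₆L x y x' y' p.1 p.2))
    (cL₁ cL₂ : ℝ) (hcL₁ : 0 < cL₁) (hcL₂ : 0 < cL₂)
    (hbd₁ : ∀ x y x' y' t t', |D₅L x y x' y' t t'| ≤ cL₁ ∧ |D₆L x y x' y' t t'| ≤ cL₁)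
    (hbd₂ : ∀ x y x' y' t t', |D₅₅L x y x' y' t t'| ≤ cL₂ ∧ |D₅₆L x y x' y' t t'| ≤ cL₂ ∧
      |D₆₅L x y x' y' t t'| ≤ cL₂ ∧ |D₆₆L x y x' y' t t'| ≤ cL₂)
    (hzero : ∀ (x : X) (y : Y) (t : ℝ), L x y x y t t = 0)
    {H : Type*} [NormedAddCommGroup H] [InnerProductSpace ℝ H] [CompleteSpace H]
    (Φ : X → H) (hΦcont : Continuous Φ) (κ : ℝ) (hκ : ∀ x, ‖Φ x‖ ≤ κ)
    (hL_convex : ∀ x y x' y',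
      ConvexOn ℝ Set.univ fun t : ℝ × ℝ => L x y x' y' t.1 t.2)
    (l : ℝ) (hl : 0 < l)
    (P Q : Measure (X × Y)) (hP : IsProbabilityMeasure P) (hQ : IsProbabilityMeasure Q)
    (fP fQ : H)
    (hfP : ∀ g : H, shiftedRisk L Φ P fP + l * ‖fP‖ ^ 2
      ≤ shiftedRisk L Φ P g + l * ‖g‖ ^ 2)
    (hfQ : ∀ g : H, shiftedRisk L Φ Q fQ + l * ‖fQ‖ ^ 2
      ≤ shiftedRisk L Φ Q g + l * ‖g‖ ^ 2) :
    ‖fP - fQ‖ ≤ (1 / l) *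
      ‖(∫ z : (X × Y) × (X × Y),
          ((D₅L z.1.1 z.1.2 z.2.1 z.2.2 ⟪fP, Φ z.1.1⟫ ⟪fP, Φ z.2.1⟫) • Φ z.1.1
            + (D₆L z.1.1 z.1.2 z.2.1 z.2.2 ⟪fP, Φ z.1.1⟫ ⟪fP, Φ z.2.1⟫) • Φ z.2.1)
          ∂(P.prod P))
        - ∫ z : (X × Y) × (X × Y),
          ((D₅L z.1.1 z.1.2 z.2.1 z.2.2 ⟪fP, Φ z.1.1⟫ ⟪fP, Φ z.2.1⟫) • Φ z.1.1
            + (D₆L z.1.1 z.1.2 z.2.1 z.2.2 ⟪fP, Φ z.1.1⟫ ⟪fP, Φ z.2.1⟫) • Φ z.2.1)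
          ∂(Q.prod Q)‖ := by
  haveI : SecondCountableTopology X := UniformSpace.secondCountable_of_separable X
  have hΦm : StronglyMeasurable Φ := hΦcont.stronglyMeasurable
  have hA : StronglyMeasurable (fun z : (X × Y) × (X × Y) => Φ z.1.1) :=
    hΦm.comp_measurable (measurable_fst.comp measurable_fst)
  have hB : StronglyMeasurable (fun z : (X × Y) × (X × Y) => Φ z.2.1) :=
    hΦm.comp_measurable (measurable_fst.comp measurable_snd)
  have hin : ∀ f : H, Measurable (fun x => ⟪f, Φ x⟫) := fun f =>
    (continuous_const.inner hΦcont).measurable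
  exact rpl_aux_main (Z := (X × Y) × (X × Y))
    (fun z => L z.1.1 z.1.2 z.2.1 z.2.2) (fun z => D₅L z.1.1 z.1.2 z.2.1 z.2.2)
    (fun z => D₆L z.1.1 z.1.2 z.2.1 z.2.2)
    (hL_meas.comp ((measurable_fst.comp measurable_fst).prodMk
      ((measurable_snd.comp measurable_fst).prodMk measurable_snd)))
    L₁ hL₁ (fun z => hLip _ _ _ _) (fun z => hderiv _ _ _ _) (fun z => hL_convex _ _ _ _)
    cL₁ (fun z => hbd₁ _ _ _ _) (fun z => Φ z.1.1) (fun z => Φ z.2.1) hA hB κ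
    (fun z => hκ _) (fun z => hκ _)
    (fun f => (hin f).comp (measurable_fst.comp measurable_fst))
    (fun f => (hin f).comp (measurable_fst.comp measurable_snd))
    fP fQ (P.prod P) (Q.prod Q) l hl hfP (hfQ fP)
end

section
/- Let L be a bounded pairwise loss function with L ≤ c for some constant c ∈ (0,∞), H the RKHS of a bounded measurable kernel on X, λ > 0, and define R^reg(P) := inf_{f∈H} ( R_{L,P}(f) + λ‖f‖_H² ) for Borel probability measures P on X×Y. Then for all Borel probability measures P, Q on X×Y: |R^reg(Q) − R^reg(P)| ≤ c·d_TV(Q², P²) ≤ 2c·d_TV(Q, P), where Q² = Q⊗Q and P² = P⊗P. Consequently, the maximum bias b₁(ε;P) := sup{ |R^reg(Q) − R^reg(P)| : d_TV(Q,P) ≤ ε } satisfies b₁(ε;P) ≤ 2cε for all ε ∈ (0,1) and all P. -/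
open MeasureTheory
open scoped RealInnerProductSpace

/-- The regularized risk functional `R^reg(P) = inf_{f ∈ H} (R_{L,P}(f) + λ ‖f‖²_H)`, where the
function induced by `f ∈ H` is `x ↦ ⟪f, Φ x⟫`. -/
noncomputable def regRisk {X : Type*} [MeasurableSpace X] {Y : Set ℝ}
    {H : Type*} [NormedAddCommGroup H] [InnerProductSpace ℝ H]
    (L : X → Y → X → Y → ℝ → ℝ → ℝ) (Φ : X → H) (l : ℝ)
    (P : Measure (X × Y)) : ℝ :=
  ⨅ f : H, ((∫ z : (X × Y) × (X × Y),
      L z.1.1 z.1.2 z.2.1 z.2.2 ⟪f, Φ z.1.1⟫ ⟪f, Φ z.2.1⟫ ∂(P.prod P)) + l * ‖f‖ ^ 2)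

/-- The total variation distance `d_TV(P,Q) = sup_{A measurable} |P(A) - Q(A)|`. -/
noncomputable def distTV {Z : Type*} [MeasurableSpace Z] (P Q : Measure Z) : ℝ :=
  ⨆ (A : Set Z) (_ : MeasurableSet A), |(P A).toReal - (Q A).toReal|

lemma distTV_inner_bdd {Z : Type*} [MeasurableSpace Z] (P Q : Measure Z)
    [IsProbabilityMeasure P] [IsProbabilityMeasure Q] (A : Set Z) :
    |(P A).toReal - (Q A).toReal| ≤ 1 := by
  have h1 : (P A).toReal ≤ 1 := measureReal_le_one (μ := P)
  have h2 : (Q A).toReal ≤ 1 := measureReal_le_one (μ := Q)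
  have h3 : 0 ≤ (P A).toReal := ENNReal.toReal_nonneg
  have h4 : 0 ≤ (Q A).toReal := ENNReal.toReal_nonneg
  rw [abs_le]; constructor <;> linarith

lemma le_distTV {Z : Type*} [MeasurableSpace Z] (P Q : Measure Z)
    [IsProbabilityMeasure P] [IsProbabilityMeasure Q] {A : Set Z} (hA : MeasurableSet A) :
    |(P A).toReal - (Q A).toReal| ≤ distTV P Q := by
  unfold distTV
  have hb : BddAbove (Set.range fun A : Set Z =>
      ⨆ (_ : MeasurableSet A), |(P A).toReal - (Q A).toReal|) := by
    refine ⟨1, ?_⟩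
    rintro _ ⟨B, rfl⟩
    exact Real.iSup_le (fun _ => distTV_inner_bdd P Q B) zero_le_one
  refine le_trans ?_ (le_ciSup hb A)
  simp [hA]

lemma distTV_nonneg {Z : Type*} [MeasurableSpace Z] (P Q : Measure Z) : 0 ≤ distTV P Q :=
  Real.iSup_nonneg fun _ => Real.iSup_nonneg fun _ => abs_nonneg _

lemma distTV_le {Z : Type*} [MeasurableSpace Z] (P Q : Measure Z) {d : ℝ} (hd : 0 ≤ d)
    (h : ∀ A, MeasurableSet A → |(P A).toReal - (Q A).toReal| ≤ d) : distTV P Q ≤ d :=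
  Real.iSup_le (fun A => Real.iSup_le (fun hA => h A hA) hd) hd

lemma integrable_bdd {Z : Type*} [MeasurableSpace Z] (P : Measure Z)
    [IsProbabilityMeasure P] {g : Z → ℝ} {c : ℝ} (hg : Measurable g)
    (h0 : ∀ z, 0 ≤ g z) (hgc : ∀ z, g z ≤ c) : Integrable g P :=
  Integrable.of_bound hg.aestronglyMeasurable c
    (Filter.Eventually.of_forall fun z => by rw [Real.norm_of_nonneg (h0 z)]; exact hgc z)

lemma integral_diff_le {Z : Type*} [MeasurableSpace Z] (P Q : Measure Z)
    [IsProbabilityMeasure P] [IsProbabilityMeasure Q] {g : Z → ℝ} {c : ℝ} (hc : 0 ≤ c)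
    (hg : Measurable g) (h0 : ∀ z, 0 ≤ g z) (hgc : ∀ z, g z ≤ c) :
    |∫ z, g z ∂P - ∫ z, g z ∂Q| ≤ c * distTV P Q := by
  have key : ∀ (R : Measure Z) [IsProbabilityMeasure R],
      ∫ z, g z ∂(R) = ∫ t in Set.Ioc 0 c, R.real {a | t ≤ g a} := fun R _ =>
    (integrable_bdd R hg h0 hgc).integral_eq_integral_Ioc_meas_le
      (Filter.Eventually.of_forall h0) (Filter.Eventually.of_forall hgc)
  have hint : ∀ (R : Measure Z) [IsProbabilityMeasure R],
      IntegrableOn (fun t => R.real {a | t ≤ g a}) (Set.Ioc 0 c) := by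
    intro R _
    have hanti : Antitone (fun t => R.real {a | t ≤ g a}) := fun s t hst =>
      measureReal_mono (fun a (ha : t ≤ g a) => hst.trans ha)
    exact Integrable.of_bound hanti.measurable.aestronglyMeasurable 1
      (Filter.Eventually.of_forall fun z => by
        rw [Real.norm_of_nonneg measureReal_nonneg]; exact measureReal_le_one)
  rw [key P, key Q, ← integral_sub (hint P) (hint Q), ← Real.norm_eq_abs]
  have := norm_setIntegral_le_of_norm_le_const (μ := volume) (s := Set.Ioc 0 c)
    (f := fun t => P.real {a | t ≤ g a} - Q.real {a | t ≤ g a}) (C := distTV P Q)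
    (by simp) (fun t _ => le_distTV P Q (measurableSet_le measurable_const hg))
  simpa [hc, mul_comm] using this

lemma distTV_prod_le {Z : Type*} [MeasurableSpace Z] (P Q : Measure Z)
    [IsProbabilityMeasure P] [IsProbabilityMeasure Q] :
    distTV (Q.prod Q) (P.prod P) ≤ 2 * distTV Q P := by
  refine distTV_le _ _ (by have := distTV_nonneg Q P; positivity) fun A hA => ?_
  have hm : ∀ (R : Measure Z) [IsProbabilityMeasure R],
      Measurable fun x => R.real (Prod.mk x ⁻¹' A) := fun R _ =>
    (measurable_measure_prodMk_left hA).ennreal_toReal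
  have hi : ∀ (R S : Measure Z) [IsProbabilityMeasure R] [IsProbabilityMeasure S],
      Integrable (fun x => R.real (Prod.mk x ⁻¹' A)) S := fun R S _ _ =>
    integrable_bdd S (hm R) (fun _ => measureReal_nonneg) (fun _ => measureReal_le_one)
  have hp : ∀ (R : Measure Z) [IsProbabilityMeasure R],
      ((R.prod R) A).toReal = ∫ x, R.real (Prod.mk x ⁻¹' A) ∂(R) := by
    intro R _
    rw [Measure.prod_apply hA]
    exact (integral_toReal (measurable_measure_prodMk_left hA).aemeasurable
      (Filter.Eventually.of_forall fun x => measure_lt_top _ _)).symm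
  rw [hp Q, hp P]
  have h1 : |∫ x, Q.real (Prod.mk x ⁻¹' A) ∂Q - ∫ x, P.real (Prod.mk x ⁻¹' A) ∂Q|
      ≤ distTV Q P := by
    rw [← integral_sub (hi Q Q) (hi P Q), ← Real.norm_eq_abs]
    have := norm_integral_le_of_norm_le_const (μ := Q) (C := distTV Q P)
      (f := fun x => Q.real (Prod.mk x ⁻¹' A) - P.real (Prod.mk x ⁻¹' A))
      (Filter.Eventually.of_forall fun x => le_distTV Q P (measurable_prodMk_left hA))
    simpa using this
  have h2 := integral_diff_le Q P zero_le_one (hm P) (fun _ => measureReal_nonneg)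
    (fun _ => measureReal_le_one)
  calc _ ≤ _ := abs_sub_le _ (∫ x, P.real (Prod.mk x ⁻¹' A) ∂Q) _
    _ ≤ _ := by linarith

lemma iInf_diff_le {ι : Type*} [Nonempty ι] {a b : ι → ℝ} {d : ℝ} (ha : ∀ i, 0 ≤ a i)
    (h : ∀ i, |a i - b i| ≤ d) : iInf a ≤ iInf b + d := by
  rw [← sub_le_iff_le_add]
  refine le_ciInf fun i => ?_
  have h1 : iInf a ≤ a i := ciInf_le ⟨0, by rintro _ ⟨j, rfl⟩; exact ha j⟩ i
  have := (abs_le.1 (h i)).2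
  linarith

/-- **Bounds for the maxbias over total variation neighborhoods.** If the pairwise loss `L` is
bounded by `c` and `H` is the RKHS of a bounded measurable kernel, then for all probability
measures `P`, `Q`: `|R^reg(Q) - R^reg(P)| ≤ c d_TV(Q², P²) ≤ 2c d_TV(Q, P)`, and consequently
the maximum bias over total variation `ε`-neighborhoods of `P` is at most `2cε`. -/
theorem rpl_bias_bound_tv
    {X : Type*} [MeasurableSpace X] {Y : Set ℝ} (hY : IsClosed Y)
    (L : X → Y → X → Y → ℝ → ℝ → ℝ)
    (hL_nonneg : ∀ x y x' y' t t', 0 ≤ L x y x' y' t t')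
    (hL_meas : Measurable fun p : (X × Y) × (X × Y) × ℝ × ℝ =>
      L p.1.1 p.1.2 p.2.1.1 p.2.1.2 p.2.2.1 p.2.2.2)
    (c : ℝ) (hc : 0 < c)
    (hLbd : ∀ x y x' y' t t', L x y x' y' t t' ≤ c)
    {H : Type*} [NormedAddCommGroup H] [InnerProductSpace ℝ H] [CompleteSpace H]
    (Φ : X → H) (κ : ℝ) (hκ : ∀ x, ‖Φ x‖ ≤ κ)
    (hΦmeas : ∀ f : H, Measurable fun x => ⟪f, Φ x⟫)
    (l : ℝ) (hl : 0 < l)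
    (P Q : Measure (X × Y)) (hP : IsProbabilityMeasure P) (hQ : IsProbabilityMeasure Q) :
    |regRisk L Φ l Q - regRisk L Φ l P| ≤ c * distTV (Q.prod Q) (P.prod P) ∧
    c * distTV (Q.prod Q) (P.prod P) ≤ 2 * c * distTV Q P ∧
    (∀ ε : ℝ, 0 < ε → ε < 1 →
      ∀ Q' : Measure (X × Y), IsProbabilityMeasure Q' → distTV Q' P ≤ ε →
        |regRisk L Φ l Q' - regRisk L Φ l P| ≤ 2 * c * ε) := by
  have main : ∀ R : Measure (X × Y), IsProbabilityMeasure R →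
      |regRisk L Φ l R - regRisk L Φ l P| ≤ c * distTV (R.prod R) (P.prod P) := by
    intro R hR
    have hd : ∀ f : H, |((∫ z : (X × Y) × (X × Y),
        L z.1.1 z.1.2 z.2.1 z.2.2 ⟪f, Φ z.1.1⟫ ⟪f, Φ z.2.1⟫ ∂(R.prod R)) + l * ‖f‖ ^ 2) -
        ((∫ z : (X × Y) × (X × Y),
        L z.1.1 z.1.2 z.2.1 z.2.2 ⟪f, Φ z.1.1⟫ ⟪f, Φ z.2.1⟫ ∂(P.prod P)) + l * ‖f‖ ^ 2)|
        ≤ c * distTV (R.prod R) (P.prod P) := by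
      intro f
      rw [add_sub_add_right_eq_sub]
      refine integral_diff_le _ _ hc.le ?_ (fun _ => hL_nonneg _ _ _ _ _ _)
        (fun _ => hLbd _ _ _ _ _ _)
      have hf := hΦmeas f
      have hφ : Measurable fun z : (X × Y) × (X × Y) =>
          ((z.1, z.2, ⟪f, Φ z.1.1⟫, ⟪f, Φ z.2.1⟫) : (X × Y) × (X × Y) × ℝ × ℝ) :=
        measurable_fst.prodMk (measurable_snd.prodMk
          ((hf.comp (measurable_fst.comp measurable_fst)).prodMk
            (hf.comp (measurable_fst.comp measurable_snd))))
      exact hL_meas.comp hφ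
    have hnn : ∀ (S : Measure (X × Y)) (f : H), 0 ≤ (∫ z : (X × Y) × (X × Y),
        L z.1.1 z.1.2 z.2.1 z.2.2 ⟪f, Φ z.1.1⟫ ⟪f, Φ z.2.1⟫ ∂(S.prod S)) + l * ‖f‖ ^ 2 :=
      fun S f => add_nonneg (integral_nonneg fun _ => hL_nonneg _ _ _ _ _ _) (by positivity)
    have h1 := iInf_diff_le (hnn R) hd
    have h2 := iInf_diff_le (hnn P) (fun f => by rw [abs_sub_comm]; exact hd f)
    unfold regRisk
    rw [abs_le]
    constructor <;> linarith
  have tv : ∀ R : Measure (X × Y), IsProbabilityMeasure R →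
      c * distTV (R.prod R) (P.prod P) ≤ 2 * c * distTV R P := by
    intro R hR
    have := mul_le_mul_of_nonneg_left (distTV_prod_le P R) hc.le
    linarith
  refine ⟨main Q hQ, tv Q hQ, fun ε _ _ R hR hRε => ?_⟩
  refine (main R hR).trans ((tv R hR).trans ?_)
  exact mul_le_mul_of_nonneg_left hRε (by positivity)
end

section
/- Let X be a complete separable metric space, Y ⊆ ℝ closed, k a continuous bounded kernel on X with RKHS H, and L a pairwise loss function that is separately Lipschitz continuous, differentiable in its last two arguments with continuous, uniformly bounded partial derivatives D₅L, D₆L (and bounded continuous second-order partials), and satisfies L(x,y,x,y,t,t) = 0. Let λ > 0, P a Borel probability measure on X×Y, and let f_{L★,P,λ} ∈ H be any minimizer of f ↦ R_{L★,P}(f) + λ‖f‖_H². Then for every g ∈ H: ∫ [ D₅L(x,y,x̃,ỹ,f_{L★,P,λ}(x),f_{L★,P,λ}(x̃))·g(x) + D₆L(x,y,x̃,ỹ,f_{L★,P,λ}(x),f_{L★,P,λ}(x̃))·g(x̃) ] dP²((x,y),(x̃,ỹ)) + 2λ·⟨f_{L★,P,λ}, g⟩_H = 0. -/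
open MeasureTheory
open scoped RealInnerProductSpace

/-- **First-order condition for the RPL minimizer.** Under Assumption 1 of the paper, any
minimizer `fmin` of the regularized shifted risk satisfies, for every `g ∈ H`,
`∫ [D₅L(…,fmin(x),fmin(x̃)) g(x) + D₆L(…,fmin(x),fmin(x̃)) g(x̃)] dP² + 2λ⟪fmin, g⟫_H = 0`. -/
theorem rpl_first_order_condition
    {X : Type*} [MeasurableSpace X] [MetricSpace X] [CompleteSpace X]
    [TopologicalSpace.SeparableSpace X] [BorelSpace X]
    {Y : Set ℝ} (hY : IsClosed Y)
    (L D₅L D₆L D₅₅L D₅₆L D₆₅L D₆₆L : X → Y → X → Y → ℝ → ℝ → ℝ)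
    (hL_nonneg : ∀ x y x' y' t t', 0 ≤ L x y x' y' t t')
    (hL_meas : Measurable fun p : (X × Y) × (X × Y) × ℝ × ℝ =>
      L p.1.1 p.1.2 p.2.1.1 p.2.1.2 p.2.2.1 p.2.2.2)
    (L₁ : ℝ) (hL₁ : 0 ≤ L₁)
    (hLip : ∀ x y x' y' t₁ t₂ s₁ s₂,
      |L x y x' y' t₁ t₂ - L x y x' y' s₁ s₂| ≤ L₁ * (|t₁ - s₁| + |t₂ - s₂|))
    (hderiv : ∀ x y x' y' t t', HasFDerivAt (fun p : ℝ × ℝ => L x y x' y' p.1 p.2)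
      ((D₅L x y x' y' t t') • ContinuousLinearMap.fst ℝ ℝ ℝ
        + (D₆L x y x' y' t t') • ContinuousLinearMap.snd ℝ ℝ ℝ) (t, t'))
    (hderiv₅ : ∀ x y x' y' t t', HasFDerivAt (fun p : ℝ × ℝ => D₅L x y x' y' p.1 p.2)
      ((D₅₅L x y x' y' t t') • ContinuousLinearMap.fst ℝ ℝ ℝ
        + (D₆₅L x y x' y' t t') • ContinuousLinearMap.snd ℝ ℝ ℝ) (t, t'))
    (hderiv₆ : ∀ x y x' y' t t', HasFDerivAt (fun p : ℝ × ℝ => D₆L x y x' y' p.1 p.2)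
      ((D₅₆L x y x' y' t t') • ContinuousLinearMap.fst ℝ ℝ ℝ
        + (D₆₆L x y x' y' t t') • ContinuousLinearMap.snd ℝ ℝ ℝ) (t, t'))
    (hcont₁ : ∀ x y x' y', Continuous (fun p : ℝ × ℝ => D₅L x y x' y' p.1 p.2) ∧
      Continuous (fun p : ℝ × ℝ => D₆L x y x' y' p.1 p.2))
    (hcont₂ : ∀ x y x' y', Continuous (fun p : ℝ × ℝ => D₅₅L x y x' y' p.1 p.2) ∧
      Continuous (fun p : ℝ × ℝ => D₅₆L x y x' y' p.1 p.2) ∧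
      Continuous (fun p : ℝ × ℝ => D₆₅L x y x' y' p.1 p.2) ∧
      Continuous (fun p : ℝ × ℝ => D₆₆L x y x' y' p.1 p.2))
    (cL₁ cL₂ : ℝ) (hcL₁ : 0 < cL₁) (hcL₂ : 0 < cL₂)
    (hbd₁ : ∀ x y x' y' t t', |D₅L x y x' y' t t'| ≤ cL₁ ∧ |D₆L x y x' y' t t'| ≤ cL₁)
    (hbd₂ : ∀ x y x' y' t t', |D₅₅L x y x' y' t t'| ≤ cL₂ ∧ |D₅₆L x y x' y' t t'| ≤ cL₂ ∧
      |D₆₅L x y x' y' t t'| ≤ cL₂ ∧ |D₆₆L x y x' y' t t'| ≤ cL₂)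
    (hzero : ∀ (x : X) (y : Y) (t : ℝ), L x y x y t t = 0)
    {H : Type*} [NormedAddCommGroup H] [InnerProductSpace ℝ H] [CompleteSpace H]
    (Φ : X → H) (hΦcont : Continuous Φ) (κ : ℝ) (hκ : ∀ x, ‖Φ x‖ ≤ κ)
    (P : Measure (X × Y)) [IsProbabilityMeasure P]
    (l : ℝ) (hl : 0 < l)
    (fmin : H)
    (hfmin : ∀ g : H, shiftedRisk L Φ P fmin + l * ‖fmin‖ ^ 2
      ≤ shiftedRisk L Φ P g + l * ‖g‖ ^ 2) :
    ∀ g : H,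
      (∫ z : (X × Y) × (X × Y),
        (D₅L z.1.1 z.1.2 z.2.1 z.2.2 ⟪fmin, Φ z.1.1⟫ ⟪fmin, Φ z.2.1⟫ * ⟪g, Φ z.1.1⟫
          + D₆L z.1.1 z.1.2 z.2.1 z.2.2 ⟪fmin, Φ z.1.1⟫ ⟪fmin, Φ z.2.1⟫ * ⟪g, Φ z.2.1⟫)
        ∂(P.prod P))
      + 2 * l * ⟪fmin, g⟫ = 0 := by
  intro g
  have hm : ∀ f : H, Measurable fun z : (X × Y) × (X × Y) =>
      L z.1.1 z.1.2 z.2.1 z.2.2 ⟪f, Φ z.1.1⟫ ⟪f, Φ z.2.1⟫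
      - L z.1.1 z.1.2 z.2.1 z.2.2 0 0 := by
    intro f
    have hf : Measurable fun x : X => ⟪f, Φ x⟫ := (continuous_const.inner hΦcont).measurable
    have h1 : Measurable fun z : (X × Y) × (X × Y) =>
        ((z.1, z.2, ⟪f, Φ z.1.1⟫, ⟪f, Φ z.2.1⟫) : (X × Y) × (X × Y) × ℝ × ℝ) :=
      measurable_fst.prodMk (measurable_snd.prodMk
        ((hf.comp (measurable_fst.comp measurable_fst)).prodMk
          (hf.comp (measurable_fst.comp measurable_snd))))
    have h2 : Measurable fun z : (X × Y) × (X × Y) =>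
        ((z.1, z.2, 0, 0) : (X × Y) × (X × Y) × ℝ × ℝ) :=
      measurable_fst.prodMk (measurable_snd.prodMk measurable_const)
    exact (hL_meas.comp h1).sub (hL_meas.comp h2)
  have hin : ∀ (f : H) x, |⟪f, Φ x⟫| ≤ ‖f‖ * κ := fun f x =>
    (abs_real_inner_le_norm f (Φ x)).trans
      (mul_le_mul_of_nonneg_left (hκ x) (norm_nonneg f))
  let F : ℝ → (X × Y) × (X × Y) → ℝ := fun s z =>
    L z.1.1 z.1.2 z.2.1 z.2.2 ⟪fmin + s • g, Φ z.1.1⟫ ⟪fmin + s • g, Φ z.2.1⟫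
      - L z.1.1 z.1.2 z.2.1 z.2.2 0 0
  let F' : (X × Y) × (X × Y) → ℝ := fun z =>
    D₅L z.1.1 z.1.2 z.2.1 z.2.2 ⟪fmin, Φ z.1.1⟫ ⟪fmin, Φ z.2.1⟫ * ⟪g, Φ z.1.1⟫
      + D₆L z.1.1 z.1.2 z.2.1 z.2.2 ⟪fmin, Φ z.1.1⟫ ⟪fmin, Φ z.2.1⟫ * ⟪g, Φ z.2.1⟫
  have hFm : ∀ s, Measurable (F s) := fun s => hm _
  have hdiff : ∀ z, HasDerivAt (fun s => F s z) (F' z) 0 := by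
    intro z
    have hlin : ∀ x, HasDerivAt (fun s : ℝ => ⟪fmin + s • g, Φ x⟫) ⟪g, Φ x⟫ 0 := by
      intro x
      have : HasDerivAt (fun s : ℝ => ⟪fmin, Φ x⟫ + s * ⟪g, Φ x⟫) (1 * ⟪g, Φ x⟫) 0 :=
        ((hasDerivAt_id (0:ℝ)).mul_const _).const_add _
      simpa [inner_add_left, real_inner_smul_left] using this
    have h := hderiv z.1.1 z.1.2 z.2.1 z.2.2
      ⟪fmin + (0:ℝ) • g, Φ z.1.1⟫ ⟪fmin + (0:ℝ) • g, Φ z.2.1⟫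
    have h2 := HasFDerivAt.comp_hasDerivAt (0:ℝ) h ((hlin z.1.1).prodMk (hlin z.2.1))
    have h3 := h2.sub_const (L z.1.1 z.1.2 z.2.1 z.2.2 0 0)
    simpa [F, F', Function.comp_def] using h3
  have hF'm : Measurable F' := by
    refine measurable_of_tendsto_metrizable' (f := fun (t : ℝ) z => t⁻¹ • (F (0 + t) z - F 0 z))
      (nhdsWithin (0:ℝ) (Set.Ioi 0)) (fun t => ((hFm (0 + t)).sub (hFm 0)).const_smul t⁻¹) ?_
    rw [tendsto_pi_nhds]
    exact fun z => (hdiff z).tendsto_slope_zero_right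
  have hint : Integrable (F 0) (P.prod P) := by
    refine Integrable.of_bound (hFm 0).aestronglyMeasurable
      (L₁ * (‖fmin‖ * κ + ‖fmin‖ * κ)) (Filter.Eventually.of_forall fun z => ?_)
    rw [Real.norm_eq_abs]
    refine (hLip _ _ _ _ _ _ _ _).trans ?_
    simp only [zero_smul, add_zero, sub_zero]
    exact mul_le_mul_of_nonneg_left (add_le_add (hin _ _) (hin _ _)) hL₁
  have hlip : ∀ z, LipschitzOnWith (Real.nnabs (L₁ * (‖g‖ * κ + ‖g‖ * κ)))
      (fun s => F s z) Set.univ := by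
    intro z
    refine LipschitzOnWith.of_dist_le_mul fun s _ t _ => ?_
    rw [Real.dist_eq, Real.dist_eq]
    simp only [F, sub_sub_sub_cancel_right]
    refine (hLip _ _ _ _ _ _ _ _).trans ?_
    have e : ∀ x, |⟪fmin + s • g, Φ x⟫ - ⟪fmin + t • g, Φ x⟫| ≤ (‖g‖ * κ) * |s - t| := by
      intro x
      have : ⟪fmin + s • g, Φ x⟫ - ⟪fmin + t • g, Φ x⟫ = ⟪g, Φ x⟫ * (s - t) := by
        simp only [inner_add_left, real_inner_smul_left]; ring
      rw [this, abs_mul]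
      exact mul_le_mul_of_nonneg_right (hin _ _) (abs_nonneg _)
    refine (mul_le_mul_of_nonneg_left (add_le_add (e _) (e _)) hL₁).trans ?_
    rw [← add_mul, ← mul_assoc]
    refine mul_le_mul_of_nonneg_right ?_ (abs_nonneg _)
    rw [Real.coe_nnabs]
    exact le_abs_self _
  obtain ⟨-, hD⟩ := hasDerivAt_integral_of_dominated_loc_of_lip (μ := P.prod P) (F := F) (F' := F')
    (x₀ := (0:ℝ)) (bound := fun _ => L₁ * (‖g‖ * κ + ‖g‖ * κ)) Filter.univ_mem
    (Filter.Eventually.of_forall fun s => (hFm s).aestronglyMeasurable) hint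
    hF'm.aestronglyMeasurable (Filter.Eventually.of_forall hlip) (integrable_const _)
    (Filter.Eventually.of_forall hdiff)
  have hN : HasDerivAt (fun s : ℝ => fmin + s • g) g 0 := by
    simpa using ((hasDerivAt_id (0:ℝ)).smul_const g).const_add fmin
  have hT := hD.add (hN.norm_sq.const_mul l)
  have hmin : IsLocalMin ((fun s => ∫ a, F s a ∂(P.prod P)) +
      fun s : ℝ => l * ‖fmin + s • g‖ ^ 2) 0 := by
    refine Filter.Eventually.of_forall fun s => ?_
    have := hfmin (fmin + s • g)
    simpa [F, shiftedRisk] using this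
  have hz := hmin.hasDerivAt_eq_zero hT
  simp only [zero_smul, add_zero] at hz
  rw [← hz]
  simp only [F']
  ring
end
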